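/- Let a ∈ (−1,1) and b > 1. Then: (i) there is a constant C > 0 such that for every g ∈ X_{a,b} one has A₀[g] ∈ X_{a,b}, ∫₀^∞ x A₀[g](x) dx = 0 and ‖A₀[g]‖_{X_{a,b}} ≤ C ‖g‖_{X_{a,b}}; (ii) L[A₀[g]] = g almost everywhere on (0,∞) for every g ∈ X_{a,b}; (iii) if g ∈ X_{a,b} satisfies ∫₀^∞ x g(x) dx = 0 and L[g] = 0 almost everywhere, then g = 0 almost everywhere. Consequently L restricted to X⁰_{a,b} is a bijection onto X_{a,b} with bounded inverse A₀. -/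

import Mathlib

open MeasureTheory Real Set Filter

noncomputable def weight (a b x : ℝ) : ℝ := if x ≤ 1 then x ^ a else x ^ b

noncomputable def Xnorm (a b : ℝ) (g : ℝ → ℝ) : ℝ :=
  ∫ x in Ioi (0:ℝ), |g x| * weight a b x

def MemX (a b : ℝ) (g : ℝ → ℝ) : Prop :=
  IntegrableOn (fun x => g x * weight a b x) (Ioi 0)

noncomputable def Kern (ε : ℝ) (W : ℝ → ℝ → ℝ) (x y : ℝ) : ℝ := 2 + ε * W x y

def GoodW (α : ℝ) (W : ℝ → ℝ → ℝ) : Prop :=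
  ContinuousOn (fun p : ℝ × ℝ => W p.1 p.2) (Ioi 0 ×ˢ Ioi 0) ∧
  (∀ x y : ℝ, 0 < x → 0 < y → W x y = W y x) ∧
  (∀ l x y : ℝ, 0 < l → 0 < x → 0 < y → W (l * x) (l * y) = W x y) ∧
  (∀ x y : ℝ, 0 < x → 0 < y → 0 ≤ W x y ∧ W x y ≤ (x / y) ^ α + (y / x) ^ α)

def IsProfile (K : ℝ → ℝ → ℝ) (φ : ℝ → ℝ) : Prop :=
  LocallyIntegrableOn φ (Ioi 0) ∧
  (∀ᵐ x ∂(volume.restrict (Ioi (0:ℝ))), 0 ≤ φ x) ∧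
  IntegrableOn (fun x => x * φ x) (Ioi 0) ∧
  (∀ᵐ x ∂(volume.restrict (Ioi (0:ℝ))),
    x ^ 2 * φ x = ∫ y in Ioo 0 x, ∫ z in Ioi (x - y), y * K y z * φ y * φ z)

def IsNormalised (φ : ℝ → ℝ) : Prop := ∫ x in Ioi (0:ℝ), x * φ x = 1

noncomputable def Lop (g : ℝ → ℝ) (x : ℝ) : ℝ :=
  g x - (2 / x ^ 2) *
    ∫ y in Ioo 0 x, ∫ z in Ioi (x - y), (y * exp (-y) * g z + y * g y * exp (-z))

noncomputable def m1 (x : ℝ) : ℝ := (1 - x) * exp (-x)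

noncomputable def m2 (x : ℝ) : ℝ := 1 + (1 - x) * exp (-x) * ∫ z in (1:ℝ)..x, exp z / z

noncomputable def Efun (y : ℝ) : ℝ := exp y / y - ∫ z in (1:ℝ)..y, exp z / z

noncomputable def Aop (g : ℝ → ℝ) (x : ℝ) : ℝ :=
  g x + 2 * m1 x * (∫ y in (1:ℝ)..x, Efun y * g y) - 2 * m2 x * ∫ y in Ioi x, g y

noncomputable def A0op (g : ℝ → ℝ) (x : ℝ) : ℝ :=
  Aop g x + (∫ y in Ioi (0:ℝ), y * Aop g y) * m1 x


open MeasureTheory Real Set Filter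
open scoped Topology ENNReal

/-- `F` is a locally absolutely continuous primitive of `f` on `(0,∞)`. -/
def Prim (F f : ℝ → ℝ) : Prop :=
  (∀ x y : ℝ, 0 < x → 0 < y → IntervalIntegrable f volume x y) ∧
  ∀ x y : ℝ, 0 < x → 0 < y → F y - F x = ∫ t in x..y, f t

theorem uIcc_pos {x y t : ℝ} (hx : 0 < x) (hy : 0 < y) (ht : t ∈ uIcc x y) : 0 < t := by
  have := ht.1
  exact lt_of_lt_of_le (lt_min hx hy) this

theorem uIoc_pos {x y t : ℝ} (hx : 0 < x) (hy : 0 < y) (ht : t ∈ uIoc x y) : 0 < t :=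
  uIcc_pos hx hy (uIoc_subset_uIcc ht)

theorem Prim.congr {F K f k : ℝ → ℝ} (h : Prim F f) (hF : ∀ x, 0 < x → F x = K x)
    (hf : ∀ x, 0 < x → f x = k x) : Prim K k := by
  refine ⟨fun x y hx hy => (h.1 x y hx hy).congr ?_, fun x y hx hy => ?_⟩
  · intro t ht
    exact hf t (uIoc_pos hx hy ht)
  · rw [← hF x hx, ← hF y hy, h.2 x y hx hy]
    apply intervalIntegral.integral_congr
    intro t ht
    exact hf t (uIcc_pos hx hy ht)

theorem Prim.congr_ae {F f k : ℝ → ℝ} (h : Prim F f)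
    (hf : ∀ᵐ x ∂(volume.restrict (Ioi (0:ℝ))), f x = k x) : Prim F k := by
  rw [ae_restrict_iff' measurableSet_Ioi] at hf
  refine ⟨fun x y hx hy => (h.1 x y hx hy).congr_ae ?_, fun x y hx hy => ?_⟩
  · rw [Filter.EventuallyEq, ae_restrict_iff' measurableSet_uIoc]
    filter_upwards [hf] with t ht h2
    exact ht (uIoc_pos hx hy h2)
  · rw [h.2 x y hx hy]
    apply intervalIntegral.integral_congr_ae
    filter_upwards [hf] with t ht h2
    exact ht (uIoc_pos hx hy h2)

theorem Prim.add {F K f k : ℝ → ℝ} (h : Prim F f) (h' : Prim K k) :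
    Prim (fun x => F x + K x) (fun x => f x + k x) := by
  refine ⟨fun x y hx hy => (h.1 x y hx hy).add (h'.1 x y hx hy), fun x y hx hy => ?_⟩
  rw [intervalIntegral.integral_add (h.1 x y hx hy) (h'.1 x y hx hy), ← h.2 x y hx hy,
    ← h'.2 x y hx hy]
  ring

theorem Prim.const_mul {F f : ℝ → ℝ} (h : Prim F f) (c : ℝ) :
    Prim (fun x => c * F x) (fun x => c * f x) := by
  refine ⟨fun x y hx hy => (h.1 x y hx hy).const_mul c, fun x y hx hy => ?_⟩
  rw [intervalIntegral.integral_const_mul, ← h.2 x y hx hy]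
  ring

theorem Prim.sub {F K f k : ℝ → ℝ} (h : Prim F f) (h' : Prim K k) :
    Prim (fun x => F x - K x) (fun x => f x - k x) :=
  (h.add (h'.const_mul (-1))).congr (fun x _ => by ring) (fun x _ => by ring)

theorem Prim.const (c : ℝ) : Prim (fun _ => c) (fun _ => 0) :=
  ⟨fun x y _ _ => by simp, fun x y _ _ => by simp⟩

theorem Prim.of_deriv {F f : ℝ → ℝ} (h : ∀ x, 0 < x → HasDerivAt F (f x) x)
    (hc : ContinuousOn f (Ioi 0)) : Prim F f := by
  have hi : ∀ x y : ℝ, 0 < x → 0 < y → IntervalIntegrable f volume x y := fun x y hx hy =>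
    (hc.mono (fun t ht => uIcc_pos hx hy ht)).intervalIntegrable
  refine ⟨hi, fun x y hx hy => ?_⟩
  rw [intervalIntegral.integral_eq_sub_of_hasDerivAt (fun t ht => h t (uIcc_pos hx hy ht))
    (hi x y hx hy)]

theorem Prim.of_integral {f : ℝ → ℝ} {c : ℝ} (hc : 0 < c)
    (h : ∀ x y : ℝ, 0 < x → 0 < y → IntervalIntegrable f volume x y) :
    Prim (fun x => ∫ t in c..x, f t) f := by
  refine ⟨h, fun x y hx hy => ?_⟩
  rw [intervalIntegral.integral_interval_sub_left (h c y hc hy) (h c x hc hx)]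

theorem Prim.mul {F K f k : ℝ → ℝ} (h : Prim F f) (h' : Prim K k)  :
    Prim (fun x => F x * K x) (fun x => f x * K x + F x * k x) := by
  have key : ∀ x y : ℝ, 0 < x → 0 < y →
      IntervalIntegrable (fun x => f x * K x + F x * k x) volume x y ∧
      F y * K y - F x * K x = ∫ t in x..y, (f t * K t + F t * k t) := by
    intro x y hx hy
    have hf := h.1 x y hx hy
    have hk := h'.1 x y hx hy
    have aF := hf.absolutelyContinuousOnInterval_intervalIntegral (c := x) (by simp)
    have aK := hk.absolutelyContinuousOnInterval_intervalIntegral (c := x) (by simp)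
    have main := AbsolutelyContinuousOnInterval.integral_deriv_mul_eq_sub aF aK
    have e1 : ∀ t ∈ uIcc x y, F t = F x + ∫ s in x..t, f s := fun t ht => by
      rw [← h.2 x t hx (uIcc_pos hx hy ht)]; ring
    have e2 : ∀ t ∈ uIcc x y, K t = K x + ∫ s in x..t, k s := fun t ht => by
      rw [← h'.2 x t hx (uIcc_pos hx hy ht)]; ring
    have cF : ContinuousOn F (uIcc x y) :=
      (continuousOn_const.add aF.continuousOn).congr e1
    have cK : ContinuousOn K (uIcc x y) :=
      (continuousOn_const.add aK.continuousOn).congr e2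
    have i1 := hf.mul_continuousOn aK.continuousOn
    have i2 := hk.continuousOn_mul aF.continuousOn
    refine ⟨(hf.mul_continuousOn cK).add (hk.continuousOn_mul cF), ?_⟩
    have m2 : ∫ t in x..y, (f t * (∫ s in x..t, k s) + (∫ s in x..t, f s) * k t) =
        (∫ s in x..y, f s) * (∫ s in x..y, k s) := by
      rw [intervalIntegral.integral_same, zero_mul, sub_zero] at main
      rw [← main]
      apply intervalIntegral.integral_congr_ae
      filter_upwards [hf.ae_hasDerivAt_integral, hk.ae_hasDerivAt_integral] with t h1 h2 h3
      have h4 := uIoc_subset_uIcc h3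
      rw [(h1 h4 x (by simp)).deriv, (h2 h4 x (by simp)).deriv]
    have m3 : ∫ t in x..y, (f t * K t + F t * k t) =
        ∫ t in x..y, ((f t * (∫ s in x..t, k s) + (∫ s in x..t, f s) * k t) +
          (f t * K x + F x * k t)) := by
      apply intervalIntegral.integral_congr
      intro t ht
      simp only
      rw [e1 t ht, e2 t ht]
      ring
    rw [m3, intervalIntegral.integral_add (i1.add i2)
      ((hf.mul_const _).add (hk.const_mul _)), m2, intervalIntegral.integral_add
      (hf.mul_const _) (hk.const_mul _), intervalIntegral.integral_mul_const,
      intervalIntegral.integral_const_mul, ← h.2 x y hx hy, ← h'.2 x y hx hy]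
    ring
  exact ⟨fun x y hx hy => (key x y hx hy).1, fun x y hx hy => (key x y hx hy).2⟩

theorem Prim.continuousOn {F f : ℝ → ℝ} (h : Prim F f) : ContinuousOn F (Ioi 0) := by
  intro x hx
  have hx : 0 < x := hx
  have a := (h.1 (x/2) (2*x) (by linarith) (by linarith)).absolutelyContinuousOnInterval_intervalIntegral
    (c := x/2) (by simp)
  have e1 : ∀ t ∈ uIcc (x/2) (2*x), F t = F (x/2) + ∫ s in (x/2)..t, f s := fun t ht => by
    rw [← h.2 (x/2) t (by linarith) (uIcc_pos (by linarith) (by linarith) ht)]; ring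
  have c : ContinuousOn F (uIcc (x/2) (2*x)) := (continuousOn_const.add a.continuousOn).congr e1
  refine (c.continuousAt ?_).continuousWithinAt
  rw [uIcc_of_le (by linarith)]
  exact Icc_mem_nhds (by linarith) (by linarith)

theorem Prim.const_of_zero {F f : ℝ → ℝ} (h : Prim F f)
    (hf : ∀ᵐ x ∂(volume.restrict (Ioi (0:ℝ))), f x = 0) : ∀ x, 0 < x → F x = F 1 := by
  intro x hx
  have := (h.congr_ae hf).2 1 x one_pos hx
  simp at this
  linarith

theorem Prim.eq_of {F K f : ℝ → ℝ} (h : Prim F f) (h' : Prim K f) :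
    ∀ x, 0 < x → F x - K x = F 1 - K 1 :=
  (h.sub h').const_of_zero (by simp)

theorem Prim.ae_unique {F f k : ℝ → ℝ} (h : Prim F f) (h' : Prim F k) :
    ∀ᵐ x ∂(volume.restrict (Ioi (0:ℝ))), f x = k x := by
  have key : ∀ n : ℕ, ∀ᵐ x, x ∈ uIcc (1/(n+1:ℝ)) (n+1) → f x = k x := by
    intro n
    have p1 : (0:ℝ) < 1/(n+1:ℝ) := by positivity
    have p2 : (0:ℝ) < n+1 := by positivity
    filter_upwards [(h.1 _ _ p1 p2).ae_hasDerivAt_integral,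
      (h'.1 _ _ p1 p2).ae_hasDerivAt_integral] with x h1 h2 hx
    have hx0 := uIcc_pos p1 p2 hx
    have d1 := h1 hx _ left_mem_uIcc
    have d2 := h2 hx _ left_mem_uIcc
    refine d1.unique (d2.congr_of_eventuallyEq ?_)
    filter_upwards [Ioi_mem_nhds hx0] with t ht
    rw [← h.2 _ t p1 ht, ← h'.2 _ t p1 ht]
  rw [ae_restrict_iff' measurableSet_Ioi]
  rw [← ae_all_iff] at key
  filter_upwards [key] with x hx hx0
  have hx0 : 0 < x := hx0
  obtain ⟨n, hn⟩ := exists_nat_gt (max x (1/x))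
  have a1 : x < n := lt_of_le_of_lt (le_max_left _ _) hn
  have a2 : 1/x < n := lt_of_le_of_lt (le_max_right _ _) hn
  have hn0 : (0:ℝ) < n := hx0.trans a1
  apply hx n
  rw [mem_uIcc]
  left
  constructor
  · rw [div_le_iff₀ (by positivity)]
    rw [div_lt_iff₀ hx0] at a2
    nlinarith
  · linarith

/-- passing to the limit at `0`. -/
theorem Prim.eq_integral_zero {F f : ℝ → ℝ} (h : Prim F f)
    (hi : ∀ x, 0 < x → IntervalIntegrable f volume 0 x)
    (h0 : Tendsto F (𝓝[>] 0) (𝓝 0)) : ∀ x, 0 < x → F x = ∫ t in (0:ℝ)..x, f t := by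
  intro x hx
  have a := (hi x hx).absolutelyContinuousOnInterval_intervalIntegral (c := 0) (by simp)
  have c0 : Tendsto (fun y => ∫ t in (0:ℝ)..y, f t) (𝓝[>] 0) (𝓝 0) := by
    have := (a.continuousOn 0 (by simp))
    have h2 : Tendsto (fun y => ∫ t in (0:ℝ)..y, f t) (𝓝[uIcc 0 x] 0) (𝓝 0) := by
      simpa [ContinuousWithinAt] using this
    refine h2.mono_left ?_
    rw [← nhdsWithin_Ioo_eq_nhdsGT hx, uIcc_of_le hx.le]
    exact nhdsWithin_mono _ Ioo_subset_Icc_self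
  have e : ∀ᶠ y in 𝓝[>] (0:ℝ), F y - (∫ t in (0:ℝ)..y, f t) = F x - ∫ t in (0:ℝ)..x, f t := by
    filter_upwards [self_mem_nhdsWithin] with y hy
    have := h.2 x y hx hy
    rw [← intervalIntegral.integral_interval_sub_left (hi y hy) (hi x hx)] at this
    linarith
  have l := (h0.sub c0)
  have := tendsto_nhds_unique_of_eventuallyEq l tendsto_const_nhds e
  linarith

theorem Prim.of_integral_zero {f : ℝ → ℝ}
    (hi : ∀ x, 0 < x → IntervalIntegrable f volume 0 x) :
    Prim (fun x => ∫ t in (0:ℝ)..x, f t) f :=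
  ⟨fun x y hx hy => (hi x hx).symm.trans (hi y hy), fun x y hx hy => by
    rw [intervalIntegral.integral_interval_sub_left (hi y hy) (hi x hx)]⟩

theorem tendsto_integral_zero {f : ℝ → ℝ}
    (hi : IntervalIntegrable f volume 0 1) :
    Tendsto (fun y => ∫ t in (0:ℝ)..y, f t) (𝓝[>] 0) (𝓝 0) := by
  have a := hi.absolutelyContinuousOnInterval_intervalIntegral (c := 0) (by simp)
  have := (a.continuousOn 0 (by simp))
  have h2 : Tendsto (fun y => ∫ t in (0:ℝ)..y, f t) (𝓝[uIcc 0 1] 0) (𝓝 0) := by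
    simpa [ContinuousWithinAt] using this
  refine h2.mono_left ?_
  rw [← nhdsWithin_Ioo_eq_nhdsGT one_pos, uIcc_of_le zero_le_one]
  exact nhdsWithin_mono _ Ioo_subset_Icc_self

open MeasureTheory Real Set Filter
open scoped Topology ENNReal

/-- the tail integral -/
noncomputable def tail (h : ℝ → ℝ) (x : ℝ) : ℝ := ∫ y in Ioi x, h y

theorem aesm_of_mom {h : ℝ → ℝ} (hI : IntegrableOn (fun y => y * h y) (Ioi 0)) :
    AEStronglyMeasurable h (volume.restrict (Ioi 0)) := by
  have := (measurable_id.inv.aestronglyMeasurable (μ := volume.restrict (Ioi (0:ℝ)))).mul hI.1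
  refine this.congr ?_
  filter_upwards [ae_restrict_mem measurableSet_Ioi] with x hx
  have hx : (0:ℝ) < x := hx
  simp
  field_simp

theorem integ_tail {h : ℝ → ℝ} (hI : IntegrableOn (fun y => y * h y) (Ioi 0)) {x : ℝ}
    (hx : 0 < x) : IntegrableOn h (Ioi x) := by
  have hs : Ioi x ⊆ Ioi 0 := Ioi_subset_Ioi hx.le
  have h1 := (hI.mono_set hs).norm.const_mul (1/x)
  refine Integrable.mono' h1 ((aesm_of_mom hI).mono_measure (Measure.restrict_mono hs le_rfl)) ?_
  filter_upwards [ae_restrict_mem measurableSet_Ioi] with y hy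
  have hy : x < y := hy
  rw [norm_mul, Real.norm_eq_abs y, abs_of_pos (hx.trans hy), div_mul_eq_mul_div,
    le_div_iff₀ hx, one_mul, mul_comm]
  gcongr

theorem tail_prim {h : ℝ → ℝ} (hI : IntegrableOn (fun y => y * h y) (Ioi 0)) :
    Prim (tail h) (fun x => - h x) := by
  have hi : ∀ x y : ℝ, 0 < x → 0 < y → IntervalIntegrable h volume x y := by
    intro x y hx hy
    rw [intervalIntegrable_iff]
    exact (integ_tail hI (lt_min hx hy)).mono_set (fun t ht => ht.1)
  refine ⟨fun x y hx hy => (hi x y hx hy).neg, fun x y hx hy => ?_⟩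
  have := intervalIntegral.integral_Ioi_sub_Ioi' (integ_tail hI hx) (integ_tail hI hy)
  rw [intervalIntegral.integral_neg, ← this]
  simp [tail]

theorem tail_atTop {h : ℝ → ℝ} (hI : IntegrableOn (fun y => y * h y) (Ioi 0)) :
    Tendsto (tail h) atTop (𝓝 0) := by
  have h1 := intervalIntegral_tendsto_integral_Ioi 1 (integ_tail hI one_pos) tendsto_id
  have h2 : Tendsto (fun x => tail h 1 - ∫ t in (1:ℝ)..x, h t) atTop (𝓝 (tail h 1 - tail h 1)) :=
    tendsto_const_nhds.sub h1
  rw [sub_self] at h2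
  refine h2.congr' ?_
  filter_upwards [eventually_gt_atTop 0] with x hx
  have := (tail_prim hI).2 1 x one_pos hx
  rw [intervalIntegral.integral_neg] at this
  linarith

theorem tail_zero {h : ℝ → ℝ} (hI : IntegrableOn (fun y => y * h y) (Ioi 0)) :
    Tendsto (fun x => x * tail h x) (𝓝[>] 0) (𝓝 0) := by
  have key : Tendsto (fun x => ∫ y in Ioi (0:ℝ), (Ioi x).indicator (fun y => x * h y) y) (𝓝[>] 0)
      (𝓝 (∫ y in Ioi (0:ℝ), (0:ℝ))) := by
    refine tendsto_integral_filter_of_dominated_convergence (fun y => ‖y * h y‖) ?_ ?_ hI.norm ?_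
    · filter_upwards with x
      exact ((aesm_of_mom hI).const_mul x).indicator measurableSet_Ioi
    · filter_upwards [self_mem_nhdsWithin] with x hx
      have hx : (0:ℝ) < x := hx
      filter_upwards [ae_restrict_mem measurableSet_Ioi] with y hy
      have hy : (0:ℝ) < y := hy
      by_cases hxy : y ∈ Ioi x
      · have hxy' : x < y := hxy
        rw [indicator_of_mem hxy, norm_mul, norm_mul, Real.norm_of_nonneg hx.le,
          Real.norm_of_nonneg hy.le]
        gcongr
      · rw [indicator_of_notMem hxy]
        simp
        positivity
    · filter_upwards [ae_restrict_mem measurableSet_Ioi] with y hy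
      have hy : (0:ℝ) < y := hy
      have h1 : Tendsto (fun x : ℝ => x * h y) (𝓝[>] 0) (𝓝 0) := by
        have : Tendsto (fun x : ℝ => x * h y) (𝓝 0) (𝓝 (0 * h y)) :=
          (continuous_id.mul continuous_const).tendsto 0
        rw [zero_mul] at this
        exact this.mono_left nhdsWithin_le_nhds
      refine h1.congr' ?_
      filter_upwards [Ioo_mem_nhdsGT hy] with x hx
      rw [indicator_of_mem (show y ∈ Ioi x from hx.2)]
  simp only [integral_zero] at key
  refine key.congr' ?_
  filter_upwards [self_mem_nhdsWithin] with x hx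
  have hx : (0:ℝ) < x := hx
  rw [integral_indicator measurableSet_Ioi, Measure.restrict_restrict measurableSet_Ioi,
    inter_eq_left.mpr (Ioi_subset_Ioi hx.le), integral_const_mul]
  rfl

theorem swap_lint (u v : ℝ → ℝ≥0∞) (hu : AEMeasurable u (volume.restrict (Ioi 0)))
    (hv : AEMeasurable v (volume.restrict (Ioi 0))) :
    ∫⁻ x in Ioi (0:ℝ), u x * ∫⁻ y in Ioi x, v y =
      ∫⁻ y in Ioi (0:ℝ), v y * ∫⁻ x in Ioo 0 y, u x := by
  have e1 : ∫⁻ x in Ioi (0:ℝ), u x * ∫⁻ y in Ioi x, v y =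
      ∫⁻ x in Ioi (0:ℝ), ∫⁻ y in Ioi (0:ℝ),
        {p : ℝ × ℝ | p.1 < p.2}.indicator (fun p => u p.1 * v p.2) (x, y) := by
    refine setLIntegral_congr_fun measurableSet_Ioi (fun x hx => ?_)
    have hx : (0:ℝ) < x := hx
    have : ∫⁻ y in Ioi x, v y = ∫⁻ y in Ioi (0:ℝ), (Ioi x).indicator v y := by
      rw [lintegral_indicator measurableSet_Ioi, Measure.restrict_restrict measurableSet_Ioi,
        inter_eq_left.mpr (Ioi_subset_Ioi hx.le)]
    rw [this, ← lintegral_const_mul'' _ (hv.indicator measurableSet_Ioi)]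
    congr 1
    ext y
    simp only [indicator, mem_Ioi, Set.mem_ofPred_eq]
    split_ifs <;> simp
  have e2 : ∫⁻ y in Ioi (0:ℝ), v y * ∫⁻ x in Ioo 0 y, u x =
      ∫⁻ y in Ioi (0:ℝ), ∫⁻ x in Ioi (0:ℝ),
        {p : ℝ × ℝ | p.1 < p.2}.indicator (fun p => u p.1 * v p.2) (x, y) := by
    refine setLIntegral_congr_fun measurableSet_Ioi (fun y hy => ?_)
    have hy : (0:ℝ) < y := hy
    have : ∫⁻ x in Ioo 0 y, u x = ∫⁻ x in Ioi (0:ℝ), (Iio y).indicator u x := by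
      rw [lintegral_indicator measurableSet_Iio, Measure.restrict_restrict measurableSet_Iio,
        Iio_inter_Ioi]
    rw [this, ← lintegral_const_mul'' _ (hu.indicator measurableSet_Iio)]
    congr 1
    ext x
    simp only [indicator, mem_Iio, Set.mem_ofPred_eq]
    split_ifs <;> simp [mul_comm]
  rw [e1, e2]
  refine lintegral_lintegral_swap (f := fun x y => {p : ℝ × ℝ | p.1 < p.2}.indicator
    (fun p => u p.1 * v p.2) (x, y)) ?_
  have hm : AEMeasurable (fun p : ℝ × ℝ => u p.1 * v p.2)
      ((volume.restrict (Ioi (0:ℝ))).prod (volume.restrict (Ioi (0:ℝ)))) :=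
    (hu.comp_quasiMeasurePreserving Measure.quasiMeasurePreserving_fst).mul
      (hv.comp_quasiMeasurePreserving Measure.quasiMeasurePreserving_snd)
  exact hm.indicator (measurableSet_lt measurable_fst measurable_snd)

theorem tail_integrable {h : ℝ → ℝ} (hI : IntegrableOn (fun y => y * h y) (Ioi 0)) :
    IntegrableOn (tail h) (Ioi 0) := by
  refine ⟨(tail_prim hI).continuousOn.aestronglyMeasurable measurableSet_Ioi, ?_⟩
  have hv : AEMeasurable (fun y => ‖h y‖ₑ) (volume.restrict (Ioi 0)) := (aesm_of_mom hI).enorm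
  have := swap_lint (fun _ => 1) (fun y => ‖h y‖ₑ) aemeasurable_const hv
  have le : ∫⁻ x in Ioi (0:ℝ), ‖tail h x‖ₑ ≤ ∫⁻ x in Ioi (0:ℝ), 1 * ∫⁻ y in Ioi x, ‖h y‖ₑ := by
    refine lintegral_mono (fun x => ?_)
    rw [one_mul]
    exact enorm_integral_le_lintegral_enorm _
  refine lt_of_le_of_lt le ?_
  rw [this]
  have h2 := hI.2
  refine lt_of_eq_of_lt ?_ h2
  refine setLIntegral_congr_fun measurableSet_Ioi (fun y hy => ?_)
  have hy : (0:ℝ) < y := hy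
  simp [enorm_mul, mul_comm, Real.enorm_eq_ofReal hy.le]

theorem expH_int {h : ℝ → ℝ} (hI : IntegrableOn (fun y => y * h y) (Ioi 0)) {x : ℝ} (hx : 0 < x)
    {c : ℝ → ℝ} (hc : Continuous c) :
    IntervalIntegrable (fun y => c y * tail h y) volume 0 x := by
  refine IntervalIntegrable.continuousOn_mul ?_ hc.continuousOn
  rw [intervalIntegrable_iff_integrableOn_Ioc_of_le hx.le]
  exact (tail_integrable hI).mono_set Ioc_subset_Ioi_self

theorem mom_int {h : ℝ → ℝ} (hI : IntegrableOn (fun y => y * h y) (Ioi 0)) {x : ℝ} (hx : 0 < x)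
    {c : ℝ → ℝ} (hc : Continuous c) :
    IntervalIntegrable (fun y => c y * (y * h y)) volume 0 x := by
  refine IntervalIntegrable.continuousOn_mul ?_ hc.continuousOn
  rw [intervalIntegrable_iff_integrableOn_Ioc_of_le hx.le]
  exact hI.mono_set Ioc_subset_Ioi_self

theorem Lop_eq {h : ℝ → ℝ} (hI : IntegrableOn (fun y => y * h y) (Ioi 0)) {x : ℝ} (hx : 0 < x) :
    Lop h x = h x + 2 / x * tail h x
      - 2 * (1 + x) / x ^ 2 * exp (-x) * ∫ y in (0:ℝ)..x, exp y * tail h y := by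
  have inner : ∀ y ∈ Ioo 0 x, (∫ z in Ioi (x - y), (y * exp (-y) * h z + y * h y * exp (-z))) =
      y * exp (-y) * tail h (x - y) + exp (y - x) * (y * h y) := by
    intro y hy
    have hp : 0 < x - y := by linarith [hy.2]
    rw [integral_add ((integ_tail hI hp).const_mul _) ((integrableOn_exp_neg_Ioi _).const_mul _),
      integral_const_mul, integral_const_mul, integral_exp_neg_Ioi]
    rw [neg_sub]
    simp only [tail]
    ring
  have F := ((Prim.of_deriv (F := fun y => exp y * y) (f := fun y => exp y * y + exp y * 1)
    (fun y _ => (Real.hasDerivAt_exp y).mul (hasDerivAt_id y)) (by fun_prop)).mul (tail_prim hI))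
  have i1 : ∀ x, 0 < x → IntervalIntegrable (fun y => (exp y * y + exp y * 1) * tail h y +
      exp y * y * -h y) volume 0 x := by
    intro x hx
    have := (expH_int hI hx (c := fun y => exp y * y + exp y * 1) (by fun_prop)).add
      (mom_int hI hx (c := fun y => - exp y) (by fun_prop))
    refine this.congr (fun t _ => ?_)
    ring
  have lim0 : Tendsto (fun y => exp y * y * tail h y) (𝓝[>] 0) (𝓝 0) := by
    have e : Tendsto exp (𝓝[>] 0) (𝓝 (exp 0)) :=
      (continuous_exp.tendsto 0).mono_left nhdsWithin_le_nhds
    have := e.mul (tail_zero hI)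
    rw [mul_zero] at this
    refine this.congr (fun y => by ring)
  have key := F.eq_integral_zero i1 lim0 x hx
  have t1 := intervalIntegral.integral_comp_sub_left (a := 0) (b := x)
    (fun t => (x - t) * exp (-(x - t)) * tail h t) x
  simp only [sub_sub_cancel, sub_self, sub_zero] at t1
  have i2 : IntervalIntegrable (fun t => (x - t) * exp (-(x - t)) * tail h t) volume 0 x :=
    expH_int hI hx (c := fun t => (x - t) * exp (-(x - t))) (by fun_prop)
  have i2' : IntervalIntegrable (fun y => y * exp (-y) * tail h (x - y)) volume 0 x := by
    have := (i2.comp_sub_left x).symm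
    simpa using this
  have i3 : IntervalIntegrable (fun y => exp (y - x) * (y * h y)) volume 0 x :=
    mom_int hI hx (by fun_prop)
  have i4 : IntervalIntegrable (fun y => exp y * tail h y) volume 0 x :=
    expH_int hI hx (by fun_prop)
  have total : (∫ y in Ioo 0 x, ∫ z in Ioi (x - y), (y * exp (-y) * h z + y * h y * exp (-z))) =
      exp (-x) * (1 + x) * (∫ y in (0:ℝ)..x, exp y * tail h y) - x * tail h x := by
    rw [setIntegral_congr_fun measurableSet_Ioo inner, ← integral_Ioc_eq_integral_Ioo,
      ← intervalIntegral.integral_of_le hx.le, intervalIntegral.integral_add i2' i3, t1,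
      ← intervalIntegral.integral_add i2 i3]
    have : x * tail h x = exp (-x) * (exp x * x * tail h x) := by
      have : exp (-x) * exp x = 1 := by rw [← exp_add]; simp
      linear_combination -(x * tail h x) * this
    rw [this, key, ← intervalIntegral.integral_const_mul, ← intervalIntegral.integral_const_mul,
      ← intervalIntegral.integral_sub (i4.const_mul _) ((i1 x hx).const_mul _)]
    apply intervalIntegral.integral_congr
    intro t _
    simp only
    rw [neg_sub, sub_eq_add_neg t x, exp_add]
    ring
  rw [Lop, total]
  field_simp
  ring

open MeasureTheory Real Set Filter
open scoped Topology ENNReal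

theorem mom_m1_int : IntegrableOn (fun x => x * m1 x) (Ioi 0) := by
  have h2 := Real.GammaIntegral_convergent (s := 2) (by norm_num)
  have h3 := Real.GammaIntegral_convergent (s := 3) (by norm_num)
  refine (h2.sub h3).congr_fun (fun x _ => ?_) measurableSet_Ioi
  norm_num [m1]
  ring

theorem mom_m1 : ∫ x in Ioi (0:ℝ), x * m1 x = -1 := by
  have h2 := Real.GammaIntegral_convergent (s := 2) (by norm_num)
  have h3 := Real.GammaIntegral_convergent (s := 3) (by norm_num)
  have e : ∫ x in Ioi (0:ℝ), x * m1 x =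
      ∫ x in Ioi (0:ℝ), (exp (-x) * x ^ ((2:ℝ) - 1) - exp (-x) * x ^ ((3:ℝ) - 1)) := by
    refine setIntegral_congr_fun measurableSet_Ioi (fun x _ => ?_)
    norm_num [m1]
    ring
  rw [e, integral_sub h2 h3, ← Real.Gamma_eq_integral (by norm_num),
    ← Real.Gamma_eq_integral (by norm_num), Real.Gamma_two]
  have : Real.Gamma 3 = 2 := by
    have := Real.Gamma_nat_eq_factorial 2
    rw [show ((2:ℕ):ℝ) + 1 = 3 by norm_num] at this
    rw [this]; norm_num [Nat.factorial]
  rw [this]; norm_num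

theorem hasDerivAt_expneg (x : ℝ) : HasDerivAt (fun x => exp (-x)) (-exp (-x)) x := by
  simpa using (hasDerivAt_neg x).exp

theorem expU_le {h : ℝ → ℝ} (hI : IntegrableOn (fun y => y * h y) (Ioi 0)) {x : ℝ} (hx : 0 < x) :
    |exp (-x) * ∫ y in (0:ℝ)..x, exp y * tail h y| ≤ ∫ y in Ioi (0:ℝ), |tail h y| := by
  rw [← intervalIntegral.integral_const_mul, intervalIntegral.integral_of_le hx.le]
  calc |∫ y in Ioc 0 x, exp (-x) * (exp y * tail h y)|
      ≤ ∫ y in Ioc 0 x, |exp (-x) * (exp y * tail h y)| := abs_integral_le_integral_abs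
    _ ≤ ∫ y in Ioc 0 x, |tail h y| := by
        refine setIntegral_mono_on ?_ ?_ measurableSet_Ioc (fun y hy => ?_)
        · have := (expH_int hI hx (c := exp) (by fun_prop)).const_mul (exp (-x))
          rw [intervalIntegrable_iff_integrableOn_Ioc_of_le hx.le] at this
          exact this.abs
        · exact ((tail_integrable hI).mono_set Ioc_subset_Ioi_self).abs
        · rw [← mul_assoc, ← exp_add, abs_mul, abs_of_pos (exp_pos _)]
          have : exp (-x + y) ≤ 1 := by
            rw [exp_le_one_iff]; linarith [hy.2]
          nlinarith [abs_nonneg (tail h y)]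
    _ ≤ ∫ y in Ioi (0:ℝ), |tail h y| := by
        refine setIntegral_mono_set (tail_integrable hI).abs ?_ Ioc_subset_Ioi_self.eventuallyLE
        filter_upwards with y using abs_nonneg _

theorem part3 {h : ℝ → ℝ} (hI : IntegrableOn (fun y => y * h y) (Ioi 0))
    (h0 : (∫ x in Ioi (0:ℝ), x * h x) = 0)
    (hL : ∀ᵐ x ∂(volume.restrict (Ioi (0:ℝ))), Lop h x = 0) :
    ∀ᵐ x ∂(volume.restrict (Ioi (0:ℝ))), h x = 0 := by
  set U : ℝ → ℝ := fun x => ∫ y in (0:ℝ)..x, exp y * tail h y with hU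
  have pU : Prim U (fun y => exp y * tail h y) :=
    Prim.of_integral_zero (fun x hx => expH_int hI hx (by fun_prop))
  have pc : Prim (fun x => 2 / x * exp (-x)) (fun x => -(2 / x ^ 2) * exp (-x) +
      2 / x * (-exp (-x))) := by
    refine Prim.of_deriv (fun x hx => ?_) ?_
    · have h1 : HasDerivAt (fun x : ℝ => 2 / x) (-(2 / x ^ 2)) x := by
        have := (hasDerivAt_inv hx.ne').const_mul 2
        refine (this.congr_deriv ?_).congr_of_eventuallyEq ?_
        · field_simp
        · filter_upwards with y
          rw [div_eq_mul_inv]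
      exact h1.mul (hasDerivAt_expneg x)
    · have : ∀ x ∈ Ioi (0:ℝ), x ≠ 0 := fun x hx => ne_of_gt hx
      have : ∀ x ∈ Ioi (0:ℝ), x ^ 2 ≠ 0 := fun x hx => pow_ne_zero _ (ne_of_gt hx)
      fun_prop (disch := assumption)
  have pQ : Prim (fun x => tail h x - 2 / x * exp (-x) * U x) (fun x => - Lop h x) := by
    refine ((tail_prim hI).sub (pc.mul pU)).congr (fun x _ => rfl) (fun x hx => ?_)
    rw [Lop_eq hI hx]
    have : exp (-x) * exp x = 1 := by rw [← exp_add]; simp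
    field_simp
    linear_combination (-2 * x * tail h x) * this
  have cQ := pQ.const_of_zero (by filter_upwards [hL] with x hx; simp [hx])
  have lQ : Tendsto (fun x => tail h x - 2 / x * exp (-x) * U x) atTop (𝓝 0) := by
    have l2 : Tendsto (fun x => 2 / x * exp (-x) * U x) atTop (𝓝 0) := by
      have l3 : Tendsto (fun x : ℝ => 2 / x * ∫ y in Ioi (0:ℝ), |tail h y|) atTop (𝓝 0) := by
        have := (tendsto_const_nhds (x := (2:ℝ)) (f := atTop)).div_atTop (tendsto_id (α := ℝ))
        simpa using this.mul_const (∫ y in Ioi (0:ℝ), |tail h y|)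
      refine squeeze_zero_norm' ?_ l3
      filter_upwards [eventually_gt_atTop 0] with x hx
      rw [Real.norm_eq_abs, mul_assoc, abs_mul, abs_of_pos (by positivity)]
      gcongr
      exact expU_le hI hx
    simpa using (tail_atTop hI).sub l2
  have Q1 : tail h 1 - 2 / 1 * exp (-1) * U 1 = 0 := by
    refine tendsto_nhds_unique_of_eventuallyEq tendsto_const_nhds lQ ?_
    filter_upwards [eventually_gt_atTop 0] with x hx
    exact (cQ x hx).symm
  have Q0 : ∀ x, 0 < x → tail h x = 2 / x * exp (-x) * U x := fun x hx => by
    have := cQ x hx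
    rw [Q1] at this
    linarith
  have pV : Prim (fun x => (1 / x ^ 2) * U x) (fun _ => 0) := by
    have p1 : Prim (fun x : ℝ => 1 / x ^ 2) (fun x => - 2 / x ^ 3) := by
      refine Prim.of_deriv (fun x hx => ?_) ?_
      · have := (hasDerivAt_pow 2 x).inv (pow_ne_zero _ hx.ne')
        refine (this.congr_deriv ?_).congr_of_eventuallyEq ?_
        · field_simp
          norm_num
          ring
        · filter_upwards with y
          simp
      · have : ∀ x ∈ Ioi (0:ℝ), x ^ 3 ≠ 0 := fun x hx => pow_ne_zero _ (ne_of_gt hx)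
        fun_prop (disch := assumption)
    refine (p1.mul pU).congr (fun x _ => rfl) (fun x hx => ?_)
    rw [Q0 x hx]
    have : exp (-x) * exp x = 1 := by rw [← exp_add]; simp
    field_simp
    linear_combination (2 * U x) * this
  have cV := pV.const_of_zero (by simp)
  set c := 1 / 1 ^ 2 * U 1 with hc
  have H1 : ∀ x, 0 < x → 2 * c * (x * exp (-x)) = tail h x := fun x hx => by
    have := cV x hx
    rw [Q0 x hx, ← this]
    field_simp
  have pH : Prim (tail h) (fun x => 2 * c * m1 x) := by
    have p1 : Prim (fun x => x * exp (-x)) m1 := by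
      refine Prim.of_deriv (fun x hx => ?_) ?_
      · have := (hasDerivAt_id x).mul (hasDerivAt_expneg x)
        refine this.congr_deriv ?_
        simp [m1]; ring
      · unfold m1; fun_prop
    exact (p1.const_mul (2 * c)).congr H1 (fun x _ => rfl)
  have ae := (tail_prim hI).ae_unique pH
  have c0 : 2 * c = 0 := by
    have : ∫ x in Ioi (0:ℝ), x * h x = ∫ x in Ioi (0:ℝ), -(2 * c) * (x * m1 x) := by
      refine integral_congr_ae ?_
      filter_upwards [ae] with x hx
      linear_combination -x * hx
    rw [h0, integral_const_mul, mom_m1] at this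
    linarith
  filter_upwards [ae] with x hx
  rw [c0] at hx
  linarith

open MeasureTheory Real Set Filter
open scoped Topology ENNReal

theorem Prim.mono {F f : ℝ → ℝ} (h : Prim F f) {x y : ℝ} (hx : 0 < x) (hxy : x ≤ y)
    (hf : ∀ t ∈ Icc x y, 0 ≤ f t) : F x ≤ F y := by
  have := h.2 x y hx (hx.trans_le hxy)
  have := intervalIntegral.integral_nonneg (μ := volume) hxy hf
  linarith

/-- exponential integral based at 1 -/
noncomputable def ei (x : ℝ) : ℝ := ∫ z in (1:ℝ)..x, exp z / z

theorem ei_prim : Prim ei (fun z => exp z / z) := by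
  refine Prim.of_integral one_pos (fun x y hx hy => ?_)
  apply ContinuousOn.intervalIntegrable
  have : ∀ t ∈ uIcc x y, t ≠ 0 := fun t ht => (uIcc_pos hx hy ht).ne'
  fun_prop (disch := assumption)

theorem ei_one : ei 1 = 0 := by simp [ei]

theorem expdiv_prim : Prim (fun y => exp y / y) (fun y => exp y / y - exp y / y ^ 2) := by
  refine Prim.of_deriv (fun x hx => ?_) ?_
  · have := (Real.hasDerivAt_exp x).div (hasDerivAt_id x) hx.ne'
    refine this.congr_deriv ?_
    simp only [id]
    field_simp
  · have : ∀ x ∈ Ioi (0:ℝ), x ≠ 0 := fun x hx => ne_of_gt hx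
    have : ∀ x ∈ Ioi (0:ℝ), x ^ 2 ≠ 0 := fun x hx => pow_ne_zero _ (ne_of_gt hx)
    fun_prop (disch := assumption)

theorem E_prim : Prim Efun (fun y => - (exp y / y ^ 2)) :=
  (expdiv_prim.sub ei_prim).congr (fun x _ => rfl) (fun x _ => by ring)

theorem E_one : Efun 1 = exp 1 := by simp [Efun]

theorem inv_prim : Prim (fun y : ℝ => 1 / y) (fun y => - (1 / y ^ 2)) := by
  refine Prim.of_deriv (fun x hx => ?_) ?_
  · refine ((hasDerivAt_inv hx.ne').congr_deriv ?_).congr_of_eventuallyEq ?_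
    · simp
    · filter_upwards with y
      simp
  · have : ∀ x ∈ Ioi (0:ℝ), x ^ 2 ≠ 0 := fun x hx => pow_ne_zero _ (ne_of_gt hx)
    fun_prop (disch := assumption)

theorem exp_le_three {x : ℝ} (hx : x ≤ 1) : exp x ≤ 3 := by
  have := exp_le_exp.mpr hx
  linarith [exp_one_lt_d9]

theorem E_small {y : ℝ} (hy : 0 < y) (hy1 : y ≤ 1) : |Efun y| ≤ 3 / y := by
  have h1 : Efun 1 ≤ Efun y := by
    have := (E_prim.const_mul (-1)).mono hy hy1 (fun t ht => by
      have : 0 ≤ exp t / t ^ 2 := by positivity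
      linarith)
    linarith
  have h2 := (E_prim.sub (inv_prim.const_mul 3)).mono hy hy1 (fun t ht => by
    have ht0 : 0 < t := hy.trans_le ht.1
    have : exp t / t ^ 2 ≤ 3 / t ^ 2 := by
      gcongr
      exact exp_le_three ht.2
    have e : 3 * -(1 / t ^ 2) = - (3 / t ^ 2) := by ring
    linarith)
  have e : 3 * (1 / y) = 3 / y := by ring
  rw [E_one] at h1 h2
  rw [abs_of_nonneg (by linarith [exp_pos 1])]
  have := exp_le_three (le_refl 1)
  simp only [e] at h2
  norm_num at h2
  linarith

theorem expsq_mono {x y : ℝ} (hy : 1 ≤ y) (hxy : y ≤ x) :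
    exp y / y ^ 2 ≤ 2 * (exp x / x ^ 2) := by
  have hy0 : 0 < y := by linarith
  have hx0 : 0 < x := by linarith
  have h1 : x ≤ y * (1 + (x - y)) := by nlinarith
  have h2 := Real.quadratic_le_exp_of_nonneg (sub_nonneg.mpr hxy)
  have h3 : exp x = exp y * exp (x - y) := by rw [← exp_add]; congr 1; ring
  rw [h3, ← mul_div_assoc, div_le_div_iff₀ (by positivity) (by positivity)]
  have h4 : x ^ 2 ≤ y ^ 2 * (1 + (x - y)) ^ 2 := by
    rw [← mul_pow]; gcongr
  have h5 : (1 + (x - y)) ^ 2 ≤ 2 * exp (x - y) := by nlinarith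
  calc exp y * x ^ 2 ≤ exp y * (y ^ 2 * (2 * exp (x - y))) := by
        gcongr
        exact h4.trans (by gcongr)
    _ = _ := by ring

theorem E_large {y : ℝ} (hy : 1 ≤ y) : |Efun y| ≤ 12 * (exp y / y ^ 2) := by
  have hy0 : 0 < y := by linarith
  have h1 : Efun y ≤ Efun 1 := by
    have := (E_prim.const_mul (-1)).mono one_pos hy (fun t ht => by
      have : 0 ≤ exp t / t ^ 2 := by positivity
      linarith)
    linarith
  have h2 := expsq_mono le_rfl hy
  have p : Prim (fun y => exp y / (y ^ 2 + 2))
      (fun y => (exp y * (y ^ 2 + 2) - exp y * (2 * y)) / (y ^ 2 + 2) ^ 2) := by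
    refine Prim.of_deriv (fun x hx => ?_) ?_
    · have := (Real.hasDerivAt_exp x).div ((hasDerivAt_pow 2 x).add_const 2) (by positivity)
      refine this.congr_deriv ?_
      norm_num
    · have : ∀ x ∈ Ioi (0:ℝ), (x ^ 2 + 2) ^ 2 ≠ 0 := fun x hx => by positivity
      fun_prop (disch := assumption)
  have h3 := (E_prim.add (p.const_mul 12)).mono one_pos hy (fun t ht => by
    have ht1 : 1 ≤ t := ht.1
    have ht0 : 0 < t := by linarith
    have : exp t / t ^ 2 ≤ 12 * ((exp t * (t ^ 2 + 2) - exp t * (2 * t)) / (t ^ 2 + 2) ^ 2) := by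
      rw [← mul_div_assoc, div_le_div_iff₀ (by positivity) (by positivity)]
      have : (t ^ 2 + 2) ^ 2 ≤ 12 * (t ^ 2 + 2 - 2 * t) * t ^ 2 := by
        have a1 : (t ^ 2 + 2) ≤ 3 * t ^ 2 := by nlinarith
        have a2 : 3 * (t ^ 2 + 2) ≤ 12 * (t ^ 2 + 2 - 2 * t) := by nlinarith [sq_nonneg (3 * t - 4)]
        nlinarith [mul_le_mul_of_nonneg_right a2 (sq_nonneg t),
          mul_le_mul_of_nonneg_right a1 (by positivity : 0 ≤ t ^ 2 + 2)]
      nlinarith [mul_le_mul_of_nonneg_left this (exp_pos t).le]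
    linarith)
  rw [E_one] at h1 h3
  have h4 : exp y / (y ^ 2 + 2) ≤ exp y / y ^ 2 := by gcongr; linarith
  have h5 : 0 ≤ exp 1 / (1 ^ 2 + 2) := by positivity
  have h6 := exp_pos 1
  have h7 : 0 ≤ exp y / y ^ 2 := by positivity
  norm_num at h2
  rw [abs_le]
  constructor
  · linarith
  · linarith

theorem m2_eq (x : ℝ) (hx : 0 < x) : m2 x = 1 / x - m1 x * Efun x := by
  simp only [m2, m1, Efun]
  have : exp (-x) * exp x = 1 := by rw [← exp_add]; simp
  field_simp
  linear_combination (1 - x) * this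

theorem m1_abs_le_one {x : ℝ} (hx : 0 < x) : |m1 x| ≤ 1 := by
  have h1 := Real.add_one_le_exp x
  have : exp (-x) * exp x = 1 := by rw [← exp_add]; simp
  have h2 := exp_pos (-x)
  rw [m1, abs_le]
  constructor <;> nlinarith

theorem m1_abs_large {x : ℝ} (hx : 1 ≤ x) : |m1 x| ≤ x * exp (-x) := by
  rw [m1, abs_mul, abs_of_pos (exp_pos _), abs_of_nonpos (by linarith)]
  gcongr
  linarith

theorem m2_large {x : ℝ} (hx : 1 ≤ x) : |m2 x| ≤ 13 / x := by
  have hx0 : 0 < x := by linarith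
  rw [m2_eq x hx0]
  have h1 : |m1 x * Efun x| ≤ 12 / x := by
    rw [abs_mul]
    calc |m1 x| * |Efun x| ≤ (x * exp (-x)) * (12 * (exp x / x ^ 2)) := by
          gcongr
          · exact m1_abs_large hx
          · exact E_large hx
      _ = 12 / x := by
          have : exp (-x) * exp x = 1 := by rw [← exp_add]; simp
          field_simp
          linear_combination this
  calc |1 / x - m1 x * Efun x| ≤ |1 / x| + |m1 x * Efun x| := abs_sub _ _
    _ ≤ 1 / x + 12 / x := by
        rw [abs_of_pos (by positivity : 0 < 1 / x)]
        gcongr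
    _ = 13 / x := by ring

theorem log_prim : Prim log (fun y => 1 / y) := by
  refine Prim.of_deriv (fun x hx => ?_) ?_
  · simpa using Real.hasDerivAt_log hx.ne'
  · have : ∀ x ∈ Ioi (0:ℝ), x ≠ 0 := fun x hx => ne_of_gt hx
    fun_prop (disch := assumption)

theorem m2_small {x d : ℝ} (hx : 0 < x) (hx1 : x ≤ 1) (hd : 0 < d) :
    |m2 x| ≤ (1 + 3 / d) * x ^ (-d) := by
  have h1 : ei x ≤ ei 1 := ei_prim.mono hx hx1 (fun t ht => by
    have : 0 < t := hx.trans_le ht.1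
    positivity)
  have h2 := ((log_prim.const_mul 3).sub ei_prim).mono hx hx1 (fun t ht => by
    have ht0 : 0 < t := hx.trans_le ht.1
    have : exp t / t ≤ 3 / t := by
      gcongr
      exact exp_le_three ht.2
    have e : 3 * (1 / t) = 3 / t := by ring
    linarith)
  rw [ei_one] at h1 h2
  simp only [log_one] at h2
  have h3 := Real.log_le_rpow_div (x := x⁻¹) (by positivity) hd
  rw [Real.log_inv, Real.inv_rpow hx.le, ← Real.rpow_neg hx.le] at h3
  have h4 : 1 ≤ x ^ (-d) := Real.one_le_rpow_of_pos_of_le_one_of_nonpos hx hx1 (by linarith)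
  have h5 : |ei x| ≤ 3 * (x ^ (-d) / d) := by
    rw [abs_of_nonpos h1]; linarith
  have h6 : m2 x = 1 + m1 x * ei x := rfl
  rw [h6]
  calc |1 + m1 x * ei x| ≤ |1| + |m1 x * ei x| := abs_add_le _ _
    _ ≤ 1 + 1 * (3 * (x ^ (-d) / d)) := by
        rw [abs_mul, abs_one]
        gcongr
        exact m1_abs_le_one hx
    _ ≤ x ^ (-d) + 1 * (3 * (x ^ (-d) / d)) := by gcongr
    _ = _ := by ring

open MeasureTheory Real Set Filter
open scoped Topology ENNReal

/-- the integral `∫₁ˣ E g` -/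
noncomputable def Sop (g : ℝ → ℝ) (x : ℝ) : ℝ := ∫ y in (1:ℝ)..x, Efun y * g y

theorem abs_mom {h : ℝ → ℝ} (hI : IntegrableOn (fun y => y * h y) (Ioi 0)) :
    IntegrableOn (fun y => y * |h y|) (Ioi 0) := by
  refine IntegrableOn.congr_fun (f := fun y => |y * h y|) hI.abs (fun y hy => ?_) measurableSet_Ioi
  have hy : (0:ℝ) < y := hy
  simp only [abs_mul, abs_of_pos hy]

theorem S_prim {g : ℝ → ℝ} (hI : IntegrableOn (fun y => y * g y) (Ioi 0)) :
    Prim (Sop g) (fun y => Efun y * g y) := by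
  refine Prim.of_integral one_pos (fun x y hx hy => ?_)
  have := ((tail_prim hI).1 x y hx hy).neg
  simp only [Pi.neg_def, neg_neg] at this
  exact this.continuousOn_mul (E_prim.continuousOn.mono (fun t ht => uIcc_pos hx hy ht))

theorem S_bound {g : ℝ → ℝ} (hI : IntegrableOn (fun y => y * g y) (Ioi 0)) {x y c : ℝ}
    (hx : 0 < x) (hxy : x ≤ y) (hc : 0 ≤ c) (h : ∀ t ∈ Ioc x y, |Efun t| ≤ c) :
    |∫ t in x..y, Efun t * g t| ≤ c * tail (fun t => |g t|) x := by
  have i1 := integ_tail (abs_mom hI) hx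
  have i2 : IntegrableOn (fun t => |g t|) (Ioc x y) := i1.mono_set Ioc_subset_Ioi_self
  have := intervalIntegral.norm_integral_le_of_norm_le (μ := volume) (f := fun t => Efun t * g t)
    (g := fun t => c * |g t|) hxy ?_ ?_
  · refine this.trans ?_
    rw [intervalIntegral.integral_const_mul, intervalIntegral.integral_of_le hxy]
    gcongr
    refine setIntegral_mono_set i1 ?_ Ioc_subset_Ioi_self.eventuallyLE
    filter_upwards with y using abs_nonneg _
  · filter_upwards with t ht
    rw [norm_mul, Real.norm_eq_abs, Real.norm_eq_abs]
    gcongr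
    exact h t ht
  · rw [intervalIntegrable_iff_integrableOn_Ioc_of_le hxy]
    exact i2.const_mul c

theorem S_small {g : ℝ → ℝ} (hI : IntegrableOn (fun y => y * g y) (Ioi 0)) {x : ℝ}
    (hx : 0 < x) (hx1 : x ≤ 1) : |Sop g x| ≤ 3 / x * tail (fun t => |g t|) x := by
  rw [Sop, intervalIntegral.integral_symm, abs_neg]
  refine S_bound hI hx hx1 (by positivity) (fun t ht => ?_)
  refine (E_small (hx.trans ht.1) ht.2).trans ?_
  have := ht.1
  gcongr

theorem S_large {g : ℝ → ℝ} (hI : IntegrableOn (fun y => y * g y) (Ioi 0)) {x : ℝ}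
    (hx : 1 ≤ x) : |Sop g x| ≤ 24 * (exp x / x ^ 2) * tail (fun t => |g t|) 1 := by
  rw [Sop]
  refine S_bound hI one_pos hx (by positivity) (fun t ht => ?_)
  refine (E_large ht.1.le).trans ?_
  linarith [expsq_mono ht.1.le ht.2]

theorem part2 {g : ℝ → ℝ} (hI : IntegrableOn (fun y => y * g y) (Ioi 0))
    (hA : IntegrableOn (fun y => y * A0op g y) (Ioi 0)) (x : ℝ) (hx : 0 < x) :
    Lop (A0op g) x = g x := by
  set k := ∫ y in Ioi (0:ℝ), y * Aop g y with hk
  set G := tail g with hG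
  set h := A0op g with hh
  set V : ℝ → ℝ := fun x => -1 * (G x * Efun x) - Sop g x - k / 2 with hV
  have ee : ∀ x : ℝ, exp (-x) * exp x = 1 := fun x => by rw [← exp_add]; simp
  have pG : Prim G (fun x => - g x) := tail_prim hI
  have pV : Prim V (fun y => G y * (exp y / y ^ 2)) := by
    refine ((((pG.mul E_prim).const_mul (-1)).sub (S_prim hI)).sub (Prim.const (k / 2))).congr
      (fun x _ => rfl) (fun x hx => ?_)
    ring
  have hA0 : ∀ x, 0 < x → h x = g x - 2 * m1 x * V x - 2 * G x / x := by
    intro x hx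
    have : h x = g x + 2 * m1 x * Sop g x - 2 * m2 x * G x + k * m1 x := rfl
    rw [this, m2_eq x hx, hV]
    ring
  have pe : Prim (fun x => 2 * x * exp (-x)) (fun x => 2 * m1 x) := by
    refine Prim.of_deriv (fun x hx => ?_) ?_
    · have := ((hasDerivAt_id x).const_mul 2).mul (hasDerivAt_expneg x)
      refine this.congr_deriv ?_
      simp [m1]; ring
    · unfold m1; fun_prop
  have pH : Prim (fun x => 2 * x * exp (-x) * V x + G x) (fun x => - h x) := by
    refine ((pe.mul pV).add pG).congr (fun x _ => rfl) (fun x hx => ?_)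
    rw [hA0 x hx]
    field_simp
    linear_combination (2 * G x) * ee x
  have lT : Tendsto (fun x => 2 * x * exp (-x) * V x + G x) atTop (𝓝 0) := by
    have lG : Tendsto G atTop (𝓝 0) := tail_atTop hI
    have l1 : Tendsto (fun x => 2 * x * exp (-x) * V x) atTop (𝓝 0) := by
      have b : Tendsto (fun x : ℝ => 24 * |G x| + 48 / x * tail (fun t => |g t|) 1
          + |k| * (x ^ 1 * exp (-x))) atTop (𝓝 (24 * 0 + 0 * tail (fun t => |g t|) 1 + |k| * 0)) := by
        refine ((tendsto_const_nhds.mul (by simpa using lG.abs)).add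
          (Tendsto.mul_const _ ?_)).add
          (tendsto_const_nhds.mul (tendsto_pow_mul_exp_neg_atTop_nhds_zero 1))
        exact tendsto_const_nhds.div_atTop tendsto_id
      simp only [mul_zero, zero_mul, add_zero] at b
      refine squeeze_zero_norm' ?_ b
      filter_upwards [eventually_ge_atTop 1] with x hx
      have hx0 : 0 < x := by linarith
      have b1 := E_large hx
      have b2 := S_large hI hx
      have b3 : |V x| ≤ |G x| * |Efun x| + |Sop g x| + |k| / 2 := by
        calc |V x| ≤ |-1 * (G x * Efun x) - Sop g x| + |k / 2| := abs_sub _ _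
          _ ≤ |-1 * (G x * Efun x)| + |Sop g x| + |k / 2| := by gcongr; exact abs_sub _ _
          _ = _ := by rw [abs_mul, abs_mul, abs_div]; simp
      rw [Real.norm_eq_abs, abs_mul, abs_of_pos (by positivity : 0 < 2 * x * exp (-x))]
      calc 2 * x * exp (-x) * |V x| ≤ 2 * x * exp (-x) * (|G x| * (12 * (exp x / x ^ 2)) +
            24 * (exp x / x ^ 2) * tail (fun t => |g t|) 1 + |k| / 2) := by
            gcongr
            refine b3.trans ?_
            gcongr
        _ = 24 * |G x| / x + 48 / x * tail (fun t => |g t|) 1 + |k| * (x ^ 1 * exp (-x)) := by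
            field_simp
            linear_combination (24 * |G x| + 48 * tail (fun t => |g t|) 1) * ee x
        _ ≤ _ := by
            gcongr
            exact div_le_self (by positivity) hx
    simpa using l1.add lG
  have Heq : ∀ x, 0 < x → tail h x = 2 * x * exp (-x) * V x + G x := by
    intro x hx
    have e := (tail_prim hA).eq_of pH
    have l := (tail_atTop hA).sub lT
    have : tail h 1 - (2 * 1 * exp (-1) * V 1 + G 1) = 0 - 0 := by
      refine tendsto_nhds_unique_of_eventuallyEq tendsto_const_nhds l ?_
      filter_upwards [eventually_gt_atTop 0] with y hy
      exact (e y hy).symm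
    have e2 := e x hx
    simp only [this] at e2
    linarith
  have pU : Prim (fun x => x ^ 2 * V x) (fun x => exp x * tail h x) := by
    have p1 : Prim (fun x : ℝ => x ^ 2) (fun x => 2 * x) := by
      refine Prim.of_deriv (fun x hx => ?_) (by fun_prop)
      simpa using hasDerivAt_pow 2 x
    refine (p1.mul pV).congr (fun x _ => rfl) (fun x hx => ?_)
    rw [Heq x hx]
    field_simp
    linear_combination (- 2 * x * V x) * ee x
  have l0 : Tendsto (fun x => x ^ 2 * V x) (𝓝[>] 0) (𝓝 0) := by
    have lid : Tendsto (fun x : ℝ => x ^ 2) (𝓝[>] 0) (𝓝 0) := by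
      have : Tendsto (fun x : ℝ => x ^ 2) (𝓝 0) (𝓝 (0 ^ 2)) := (continuous_pow 2).tendsto 0
      norm_num at this
      exact this.mono_left nhdsWithin_le_nhds
    have b : Tendsto (fun x : ℝ => 3 * |x * G x| + 3 * (x * tail (fun t => |g t|) x)
        + x ^ 2 * (|k| / 2)) (𝓝[>] 0) (𝓝 (3 * 0 + 3 * 0 + 0 * (|k| / 2))) :=
      ((tendsto_const_nhds.mul (by simpa using (tail_zero hI).abs)).add
        (tendsto_const_nhds.mul (tail_zero (abs_mom hI)))).add (lid.mul_const _)
    simp only [mul_zero, zero_mul, add_zero] at b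
    refine squeeze_zero_norm' ?_ b
    filter_upwards [Ioo_mem_nhdsGT one_pos] with x hx
    have hx0 : 0 < x := hx.1
    have b1 := E_small hx0 hx.2.le
    have b2 := S_small hI hx0 hx.2.le
    have b3 : |V x| ≤ |G x| * |Efun x| + |Sop g x| + |k| / 2 := by
      calc |V x| ≤ |-1 * (G x * Efun x) - Sop g x| + |k / 2| := abs_sub _ _
        _ ≤ |-1 * (G x * Efun x)| + |Sop g x| + |k / 2| := by gcongr; exact abs_sub _ _
        _ = _ := by rw [abs_mul, abs_mul, abs_div]; simp
    rw [Real.norm_eq_abs, abs_mul, abs_of_pos (by positivity : 0 < x ^ 2)]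
    calc x ^ 2 * |V x| ≤ x ^ 2 * (|G x| * (3 / x) + 3 / x * tail (fun t => |g t|) x + |k| / 2) := by
          gcongr
          refine b3.trans ?_
          gcongr
      _ = _ := by
          rw [abs_mul, abs_of_pos hx0]
          field_simp
  have Ueq := pU.eq_integral_zero (fun x hx => expH_int hA hx (by fun_prop)) l0 x hx
  rw [Lop_eq hA hx, ← Ueq, Heq x hx, hA0 x hx, m1]
  field_simp
  ring

open MeasureTheory Real Set Filter
open scoped Topology ENNReal

theorem weight_pos (a b : ℝ) {x : ℝ} (hx : 0 < x) : 0 < weight a b x := by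
  unfold weight; split_ifs <;> positivity

theorem weight_meas (a b : ℝ) : Measurable (weight a b) :=
  Measurable.ite measurableSet_Iic (by fun_prop) (by fun_prop)

theorem le_weight {a b : ℝ} (ha : a ≤ 1) (hb : 1 ≤ b) {x : ℝ} (hx : 0 < x) :
    x ≤ weight a b x := by
  unfold weight
  split_ifs with h
  · simpa using Real.rpow_le_rpow_of_exponent_ge hx h ha
  · simpa using Real.rpow_le_rpow_of_exponent_le (le_of_not_ge h) hb

/-- the extended norm -/
noncomputable def N (a b : ℝ) (g : ℝ → ℝ) : ℝ≥0∞ :=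
  ∫⁻ x in Ioi (0:ℝ), ‖g x‖ₑ * ENNReal.ofReal (weight a b x)

theorem enorm_mul_weight (a b : ℝ) (g : ℝ → ℝ) {x : ℝ} (hx : 0 < x) :
    ‖g x * weight a b x‖ₑ = ‖g x‖ₑ * ENNReal.ofReal (weight a b x) := by
  rw [enorm_mul, Real.enorm_eq_ofReal (weight_pos a b hx).le]

theorem N_eq (a b : ℝ) (g : ℝ → ℝ) : N a b g = ∫⁻ x in Ioi (0:ℝ), ‖g x * weight a b x‖ₑ :=
  setLIntegral_congr_fun measurableSet_Ioi (fun _ hx => (enorm_mul_weight a b g hx).symm)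

theorem memX_iff {a b : ℝ} {g : ℝ → ℝ} : MemX a b g ↔
    AEStronglyMeasurable g (volume.restrict (Ioi 0)) ∧ N a b g < ∞ := by
  constructor
  · intro h
    refine ⟨?_, ?_⟩
    · have := h.1.mul ((weight_meas a b).inv.aestronglyMeasurable)
      refine this.congr ?_
      filter_upwards [ae_restrict_mem measurableSet_Ioi] with x hx
      have := (weight_pos a b hx).ne'
      simp
      field_simp
    · rw [N_eq]; exact h.2
  · rintro ⟨h1, h2⟩
    refine ⟨h1.mul (weight_meas a b).aestronglyMeasurable, ?_⟩
    rw [N_eq] at h2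
    exact h2

theorem mom_le_N {a b : ℝ} (ha : a ≤ 1) (hb : 1 ≤ b) (g : ℝ → ℝ) :
    ∫⁻ x in Ioi (0:ℝ), ‖x * g x‖ₑ ≤ N a b g := by
  refine setLIntegral_mono' measurableSet_Ioi (fun x hx => ?_)
  have hx : (0:ℝ) < x := hx
  rw [enorm_mul, mul_comm, Real.enorm_eq_ofReal hx.le]
  gcongr
  exact le_weight ha hb hx

theorem MemX.mom {a b : ℝ} (ha : a ≤ 1) (hb : 1 ≤ b) {g : ℝ → ℝ} (h : MemX a b g) :
    IntegrableOn (fun y => y * g y) (Ioi 0) := by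
  obtain ⟨h1, h2⟩ := memX_iff.mp h
  exact ⟨measurable_id.aestronglyMeasurable.mul h1, (mom_le_N ha hb g).trans_lt h2⟩

theorem Xnorm_eq {a b : ℝ} {g : ℝ → ℝ} (h : MemX a b g) : Xnorm a b g = (N a b g).toReal := by
  rw [N_eq, ← integral_norm_eq_lintegral_enorm h.1, Xnorm]
  refine setIntegral_congr_fun measurableSet_Ioi (fun x hx => ?_)
  simp [abs_of_pos (weight_pos a b hx)]

theorem schur_up {a b : ℝ} {g : ℝ → ℝ} (hg : AEStronglyMeasurable g (volume.restrict (Ioi 0)))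
    {u e : ℝ → ℝ≥0∞} (hu : Measurable u) (he : Measurable e) {C : ℝ≥0∞}
    (h : ∀ y, 0 < y → e y * ∫⁻ x in Ioo 0 y, u x ≤ C * ENNReal.ofReal (weight a b y)) :
    ∫⁻ x in Ioi (0:ℝ), u x * ∫⁻ y in Ioi x, e y * ‖g y‖ₑ ≤ C * N a b g := by
  have hm : AEMeasurable (fun y => ‖g y‖ₑ * ENNReal.ofReal (weight a b y))
      (volume.restrict (Ioi 0)) := hg.enorm.mul (weight_meas a b).ennreal_ofReal.aemeasurable
  rw [swap_lint u (fun y => e y * ‖g y‖ₑ) hu.aemeasurable (he.aemeasurable.mul hg.enorm), N,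
    ← lintegral_const_mul'' _ hm]
  refine setLIntegral_mono' measurableSet_Ioi (fun y hy => ?_)
  calc e y * ‖g y‖ₑ * ∫⁻ x in Ioo 0 y, u x = ‖g y‖ₑ * (e y * ∫⁻ x in Ioo 0 y, u x) := by ring
    _ ≤ ‖g y‖ₑ * (C * ENNReal.ofReal (weight a b y)) := mul_le_mul_right (h y hy) _
    _ = _ := by ring

theorem schur_low {a b : ℝ} {g : ℝ → ℝ} (hg : AEStronglyMeasurable g (volume.restrict (Ioi 0)))
    {u e : ℝ → ℝ≥0∞} (hu : Measurable u) (he : Measurable e) {C : ℝ≥0∞}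
    (h : ∀ y, 0 < y → e y * ∫⁻ x in Ioi y, u x ≤ C * ENNReal.ofReal (weight a b y)) :
    ∫⁻ x in Ioi (0:ℝ), u x * ∫⁻ y in Ioo 0 x, e y * ‖g y‖ₑ ≤ C * N a b g := by
  have hm : AEMeasurable (fun y => ‖g y‖ₑ * ENNReal.ofReal (weight a b y))
      (volume.restrict (Ioi 0)) := hg.enorm.mul (weight_meas a b).ennreal_ofReal.aemeasurable
  rw [← swap_lint (fun y => e y * ‖g y‖ₑ) u (he.aemeasurable.mul hg.enorm) hu.aemeasurable, N,
    ← lintegral_const_mul'' _ hm]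
  refine setLIntegral_mono' measurableSet_Ioi (fun y hy => ?_)
  calc e y * ‖g y‖ₑ * ∫⁻ x in Ioi y, u x = ‖g y‖ₑ * (e y * ∫⁻ x in Ioi y, u x) := by ring
    _ ≤ ‖g y‖ₑ * (C * ENNReal.ofReal (weight a b y)) := mul_le_mul_right (h y hy) _
    _ = _ := by ring

theorem lint_rpow {p y : ℝ} (hp : -1 < p) (hy : 0 < y) :
    ∫⁻ x in Ioc 0 y, ENNReal.ofReal (x ^ p) = ENNReal.ofReal (y ^ (p + 1) / (p + 1)) := by
  have hi : IntegrableOn (fun x : ℝ => x ^ p) (Ioc 0 y) := by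
    rw [← intervalIntegrable_iff_integrableOn_Ioc_of_le hy.le]
    exact intervalIntegral.intervalIntegrable_rpow' hp
  rw [← ofReal_integral_eq_lintegral_ofReal hi, ← intervalIntegral.integral_of_le hy.le,
    integral_rpow (Or.inl hp), Real.zero_rpow (by linarith), sub_zero]
  filter_upwards [ae_restrict_mem measurableSet_Ioc] with x hx
  exact Real.rpow_nonneg hx.1.le _

noncomputable def e1 (y : ℝ) : ℝ≥0∞ := if y ≤ 1 then ENNReal.ofReal (3 / y) else 0
noncomputable def e2 (y : ℝ) : ℝ≥0∞ := if 1 < y then ENNReal.ofReal (12 * (exp y / y ^ 2)) else 0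
noncomputable def u1 (a x : ℝ) : ℝ≥0∞ := if x ≤ 1 then ENNReal.ofReal (2 * x ^ a) else 0
noncomputable def u2 (b x : ℝ) : ℝ≥0∞ :=
  if 1 < x then ENNReal.ofReal (2 * (x * exp (-x)) * x ^ b) else 0

theorem e1_meas : Measurable e1 :=
  Measurable.ite measurableSet_Iic (by fun_prop) measurable_const
theorem e2_meas : Measurable e2 :=
  Measurable.ite measurableSet_Ioi (by fun_prop) measurable_const
theorem u1_meas (a : ℝ) : Measurable (u1 a) :=
  Measurable.ite measurableSet_Iic (by fun_prop) measurable_const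
theorem u2_meas (b : ℝ) : Measurable (u2 b) :=
  Measurable.ite measurableSet_Ioi (by fun_prop) measurable_const

theorem S_enorm_small (g : ℝ → ℝ) {x : ℝ} (hx : 0 < x) (hx1 : x ≤ 1) :
    ‖Sop g x‖ₑ ≤ ∫⁻ y in Ioi x, e1 y * ‖g y‖ₑ := by
  rw [Sop, intervalIntegral.integral_symm, enorm_neg, intervalIntegral.integral_of_le hx1]
  refine (enorm_integral_le_lintegral_enorm _).trans ?_
  refine le_trans ?_ (lintegral_mono_set ((Ioc_subset_Ioi_self : Ioc x 1 ⊆ Ioi x)))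
  refine setLIntegral_mono' measurableSet_Ioc (fun y hy => ?_)
  rw [enorm_mul, e1, if_pos hy.2, Real.enorm_eq_ofReal_abs]
  gcongr
  exact E_small (hx.trans hy.1) hy.2

theorem S_enorm_large (g : ℝ → ℝ) {x : ℝ} (hx1 : 1 < x) :
    ‖Sop g x‖ₑ ≤ ∫⁻ y in Ioo 0 x, e2 y * ‖g y‖ₑ := by
  rw [Sop, intervalIntegral.integral_of_le hx1.le, integral_Ioc_eq_integral_Ioo]
  refine (enorm_integral_le_lintegral_enorm _).trans ?_
  refine le_trans ?_ (lintegral_mono_set (Ioo_subset_Ioo_left (zero_le_one)))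
  refine setLIntegral_mono' measurableSet_Ioo (fun y hy => ?_)
  rw [enorm_mul, e2, if_pos hy.1, Real.enorm_eq_ofReal_abs]
  gcongr
  exact E_large hy.1.le

theorem cond1 {a b : ℝ} (ha : -1 < a) {y : ℝ} (hy : 0 < y) :
    e1 y * ∫⁻ x in Ioo 0 y, u1 a x ≤
      ENNReal.ofReal (6 / (a + 1)) * ENNReal.ofReal (weight a b y) := by
  have ha1 : 0 < a + 1 := by linarith
  unfold e1
  split_ifs with h
  · have : ∫⁻ x in Ioo 0 y, u1 a x ≤ ENNReal.ofReal 2 * ENNReal.ofReal (y ^ (a + 1) / (a + 1)) := by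
      rw [← lint_rpow ha hy, setLIntegral_congr Ioo_ae_eq_Ioc, ← lintegral_const_mul _ (by fun_prop)]
      refine setLIntegral_mono' measurableSet_Ioc (fun x hx => ?_)
      rw [u1, if_pos (hx.2.trans h), ENNReal.ofReal_mul (by norm_num)]
    refine (mul_le_mul_right this _).trans (le_of_eq ?_)
    rw [← ENNReal.ofReal_mul (by positivity), ← ENNReal.ofReal_mul (by positivity),
      ← ENNReal.ofReal_mul (by positivity), weight, if_pos h, Real.rpow_add hy, Real.rpow_one]
    congr 1
    field_simp
    norm_num
  · simp

theorem exp_poly_bound (p : ℝ) (hp : 0 < p) : ∃ K > (0:ℝ), ∀ x y : ℝ, 1 ≤ y → y ≤ x →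
    x ^ p * exp (-x) ≤ K * (y ^ p * exp (-y)) * (exp (y / 2) * exp (-1 / 2 * x)) := by
  refine ⟨exp (p * log (2 * p) + 1 / 2), exp_pos _, fun x y hy hxy => ?_⟩
  have hy0 : 0 < y := by linarith
  have hx0 : 0 < x := by linarith
  have hs : 0 < 1 + (x - y) := by linarith
  have h1 : x ≤ y * (1 + (x - y)) := by nlinarith
  have h2 : p * log (1 + (x - y)) ≤ (x - y) / 2 + (p * log (2 * p) + 1 / 2) := by
    have := Real.log_le_sub_one_of_pos (x := (1 + (x - y)) / (2 * p)) (by positivity)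
    rw [Real.log_div hs.ne' (by positivity)] at this
    have h3 := mul_le_mul_of_nonneg_left this hp.le
    have h4 : p * ((1 + (x - y)) / (2 * p) - 1) = (1 + (x - y)) / 2 - p := by field_simp
    rw [h4] at h3
    nlinarith
  have h5 : (1 + (x - y)) ^ p ≤ exp ((x - y) / 2) * exp (p * log (2 * p) + 1 / 2) := by
    rw [Real.rpow_def_of_pos hs, ← exp_add, exp_le_exp]
    linarith
  have h6 : x ^ p ≤ y ^ p * (1 + (x - y)) ^ p := by
    rw [← Real.mul_rpow hy0.le hs.le]
    exact Real.rpow_le_rpow hx0.le h1 hp.le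
  have h7 : exp (-x) * exp ((x - y) / 2) = exp (-y) * (exp (y / 2) * exp (-1 / 2 * x)) := by
    rw [← exp_add, ← exp_add, ← exp_add]; congr 1; ring
  calc x ^ p * exp (-x) ≤ y ^ p * (exp ((x - y) / 2) * exp (p * log (2 * p) + 1 / 2)) * exp (-x) := by
        gcongr
        exact h6.trans (by gcongr)
    _ = y ^ p * exp (p * log (2 * p) + 1 / 2) * (exp (-x) * exp ((x - y) / 2)) := by ring
    _ = _ := by rw [h7]; ring

theorem cond2 {b : ℝ} (hb : 1 < b) : ∃ C : ℝ, ∀ a : ℝ, ∀ y : ℝ, 0 < y →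
    e2 y * ∫⁻ x in Ioi y, u2 b x ≤ ENNReal.ofReal C * ENNReal.ofReal (weight a b y) := by
  obtain ⟨K, hK, hKb⟩ := exp_poly_bound (b + 1) (by linarith)
  refine ⟨48 * K, fun a y hy => ?_⟩
  unfold e2
  split_ifs with h
  · have hi := integrableOn_exp_mul_Ioi (a := -1 / 2) (by norm_num) y
    have he : ∫⁻ x in Ioi y, ENNReal.ofReal (exp (-1 / 2 * x)) =
        ENNReal.ofReal (2 * exp (-1 / 2 * y)) := by
      rw [← ofReal_integral_eq_lintegral_ofReal hi, integral_exp_mul_Ioi (by norm_num)]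
      · congr 1; ring
      · filter_upwards with x using (exp_pos _).le
    have : ∫⁻ x in Ioi y, u2 b x ≤ ENNReal.ofReal (2 * K * (y ^ (b + 1) * exp (-y)) * exp (y / 2))
        * ENNReal.ofReal (2 * exp (-1 / 2 * y)) := by
      rw [← he, ← lintegral_const_mul _ (by fun_prop)]
      refine setLIntegral_mono' measurableSet_Ioi (fun x hx => ?_)
      have hx : y < x := hx
      rw [u2, if_pos (h.trans hx), ← ENNReal.ofReal_mul (by positivity)]
      apply ENNReal.ofReal_le_ofReal
      have := hKb x y h.le hx.le
      have e : 2 * (x * exp (-x)) * x ^ b = 2 * (x ^ (b + 1) * exp (-x)) := by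
        rw [Real.rpow_add (hy.trans hx), Real.rpow_one]; ring
      rw [e]
      linarith
    refine (mul_le_mul_right this _).trans ?_
    rw [← ENNReal.ofReal_mul (by positivity), ← ENNReal.ofReal_mul (by positivity),
      ← ENNReal.ofReal_mul (by positivity), weight, if_neg (not_le.mpr h)]
    apply ENNReal.ofReal_le_ofReal
    have ee1 : exp (-y) * exp y = 1 := by rw [← exp_add]; simp
    have ee2 : exp (y / 2) * exp (-1 / 2 * y) = 1 := by
      rw [← exp_add, show y / 2 + -1 / 2 * y = 0 by ring, exp_zero]
    have : 12 * (exp y / y ^ 2) * (2 * K * (y ^ (b + 1) * exp (-y)) * exp (y / 2) *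
        (2 * exp (-1 / 2 * y))) = 48 * K * y ^ b / y := by
      rw [Real.rpow_add hy, Real.rpow_one]
      calc _ = 48 * K * y ^ b / y * (exp (-y) * exp y) * (exp (y / 2) * exp (-1 / 2 * y)) := by
            field_simp; ring
        _ = _ := by rw [ee1, ee2]; ring
    rw [this]
    exact div_le_self (by positivity) h.le
  · simp

theorem cond3 {a b : ℝ} (ha : a ∈ Ioo (-1:ℝ) 1) (hb : 1 < b) {y : ℝ} (hy : 0 < y) :
    ∫⁻ x in Ioo 0 y, ENNReal.ofReal (weight ((a - 1) / 2) (b - 1) x) ≤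
      ENNReal.ofReal (2 / (a + 1) + 1 / b) * ENNReal.ofReal (weight a b y) := by
  obtain ⟨ha1, ha2⟩ := ha
  have hp : 0 < a + 1 := by linarith
  have hq : -1 < (a - 1) / 2 := by linarith
  have small : ∀ z, 0 < z → z ≤ 1 →
      ∫⁻ x in Ioc 0 z, ENNReal.ofReal (weight ((a - 1) / 2) (b - 1) x) =
      ENNReal.ofReal (2 / (a + 1) * z ^ ((a + 1) / 2)) := by
    intro z hz hz1
    have := lint_rpow hq hz
    rw [show (a - 1) / 2 + 1 = (a + 1) / 2 by ring] at this
    rw [show 2 / (a + 1) * z ^ ((a + 1) / 2) = z ^ ((a + 1) / 2) / ((a + 1) / 2) by field_simp,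
      ← this]
    refine setLIntegral_congr_fun measurableSet_Ioc (fun x hx => ?_)
    rw [weight, if_pos (hx.2.trans hz1)]
  rw [← ENNReal.ofReal_mul (by positivity)]
  by_cases h : y ≤ 1
  · rw [setLIntegral_congr Ioo_ae_eq_Ioc, small y hy h]
    apply ENNReal.ofReal_le_ofReal
    rw [weight, if_pos h]
    have h1 : y ^ ((a + 1) / 2) ≤ y ^ a := Real.rpow_le_rpow_of_exponent_ge hy h (by linarith)
    have h2 : 0 ≤ 1 / b * y ^ a := by positivity
    have h3 : 2 / (a + 1) * y ^ ((a + 1) / 2) ≤ 2 / (a + 1) * y ^ a := by gcongr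
    linarith
  · have h : 1 < y := not_le.mp h
    have hs : Ioo 0 y ⊆ Ioc 0 1 ∪ Ioo 1 y := by
      intro x hx
      rcases le_or_gt x 1 with h' | h'
      · exact Or.inl ⟨hx.1, h'⟩
      · exact Or.inr ⟨h', hx.2⟩
    refine (lintegral_mono_set hs).trans ((lintegral_union_le _ _ _).trans ?_)
    rw [small 1 one_pos le_rfl, weight, if_neg (not_le.mpr h)]
    have : ∫⁻ x in Ioo 1 y, ENNReal.ofReal (weight ((a - 1) / 2) (b - 1) x) ≤
        ENNReal.ofReal (y ^ b / b) := by
      have := lint_rpow (p := b - 1) (by linarith) hy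
      rw [sub_add_cancel] at this
      rw [← this]
      have hs2 : Ioo 1 y ⊆ Ioc 0 y := fun x hx => ⟨one_pos.trans hx.1, hx.2.le⟩
      refine le_trans ?_ (lintegral_mono_set hs2)
      refine setLIntegral_mono' measurableSet_Ioo (fun x hx => ?_)
      rw [weight, if_neg (not_le.mpr hx.1)]
    refine (add_le_add_right this _).trans ?_
    rw [← ENNReal.ofReal_add (by positivity) (by positivity)]
    apply ENNReal.ofReal_le_ofReal
    have h1 : 1 ≤ y ^ b := Real.one_le_rpow h.le (by linarith)
    have h2 : 2 / (a + 1) * 1 ≤ 2 / (a + 1) * y ^ b := by gcongr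
    rw [Real.one_rpow]
    have h3 : y ^ b / b = 1 / b * y ^ b := by ring
    linarith

theorem m2_weight {a b : ℝ} (ha : a ∈ Ioo (-1:ℝ) 1) {x : ℝ} (hx : 0 < x) :
    2 * |m2 x| * weight a b x ≤ 2 * (14 + 6 / (a + 1)) * weight ((a - 1) / 2) (b - 1) x := by
  have hp : 0 < a + 1 := by linarith [ha.1]
  unfold weight
  split_ifs with h
  · have h1 := m2_small hx h (d := (a + 1) / 2) (by positivity)
    have h2 : x ^ ((a - 1) / 2) = x ^ (-((a + 1) / 2)) * x ^ a := by
      rw [← Real.rpow_add hx]; congr 1; ring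
    rw [h2, show (3:ℝ) / ((a + 1) / 2) = 6 / (a + 1) by field_simp; norm_num] at *
    have : |m2 x| ≤ (14 + 6 / (a + 1)) * x ^ (-((a + 1) / 2)) := h1.trans (by gcongr; norm_num)
    calc 2 * |m2 x| * x ^ a ≤ 2 * ((14 + 6 / (a + 1)) * x ^ (-((a + 1) / 2))) * x ^ a := by gcongr
      _ = _ := by ring
  · have h : 1 < x := not_le.mp h
    have h1 := m2_large h.le
    rw [Real.rpow_sub_one hx.ne']
    have h6 : 0 ≤ 6 / (a + 1) := by positivity
    calc 2 * |m2 x| * x ^ b ≤ 2 * ((14 + 6 / (a + 1)) / x) * x ^ b := by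
          gcongr
          refine h1.trans ?_
          gcongr
          linarith
      _ = _ := by ring

open MeasureTheory Real Set Filter
open scoped Topology ENNReal

theorem m1_cont : Continuous m1 := by unfold m1; fun_prop

theorem m1_memX {a b : ℝ} (ha : -1 < a) (hb : 1 < b) : MemX a b m1 := by
  have i1 := Real.GammaIntegral_convergent (s := a + 1) (by linarith)
  have i2 := Real.GammaIntegral_convergent (s := b + 1) (by linarith)
  have i3 := Real.GammaIntegral_convergent (s := a + 2) (by linarith)
  have i4 := Real.GammaIntegral_convergent (s := b + 2) (by linarith)
  refine Integrable.mono' ((i1.add i2).add (i3.add i4))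
    (m1_cont.aestronglyMeasurable.mul (weight_meas a b).aestronglyMeasurable) ?_
  filter_upwards [ae_restrict_mem measurableSet_Ioi] with x hx
  have hx : (0:ℝ) < x := hx
  have hw : weight a b x ≤ x ^ a + x ^ b := by
    have := Real.rpow_pos_of_pos hx a
    have := Real.rpow_pos_of_pos hx b
    unfold weight; split_ifs <;> linarith
  have hm : |m1 x| ≤ (1 + x) * exp (-x) := by
    rw [m1, abs_mul, abs_of_pos (exp_pos _)]
    gcongr
    rw [abs_le]; constructor <;> linarith
  rw [norm_mul, Real.norm_eq_abs, Real.norm_of_nonneg (weight_pos a b hx).le]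
  have := weight_pos a b hx
  calc |m1 x| * weight a b x ≤ (1 + x) * exp (-x) * (x ^ a + x ^ b) := by gcongr
    _ = _ := by
      simp only [Pi.add_apply]
      rw [show a + 1 - 1 = a by ring, show b + 1 - 1 = b by ring, show a + 2 - 1 = a + 1 by ring,
        show b + 2 - 1 = b + 1 by ring, Real.rpow_add hx, Real.rpow_add hx, Real.rpow_one]
      ring

theorem Aop_aesm {g : ℝ → ℝ} (hI : IntegrableOn (fun y => y * g y) (Ioi 0)) :
    AEStronglyMeasurable (Aop g) (volume.restrict (Ioi 0)) := by
  have c1 : ContinuousOn (fun x => 2 * m1 x * Sop g x) (Ioi 0) :=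
    (continuous_const.mul m1_cont).continuousOn.mul (S_prim hI).continuousOn
  have c2 : ContinuousOn (fun x => 2 * m2 x * tail g x) (Ioi 0) := by
    have : ContinuousOn m2 (Ioi 0) :=
      continuousOn_const.add (m1_cont.continuousOn.mul ei_prim.continuousOn)
    exact (continuousOn_const.mul this).mul (tail_prim hI).continuousOn
  exact ((aesm_of_mom hI).add (c1.aestronglyMeasurable measurableSet_Ioi)).sub
    (c2.aestronglyMeasurable measurableSet_Ioi)

theorem A_pointwise {a b : ℝ} (ha : a ∈ Ioo (-1:ℝ) 1) (g : ℝ → ℝ) {x : ℝ} (hx : 0 < x) :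
    ‖Aop g x‖ₑ * ENNReal.ofReal (weight a b x) ≤
      ‖g x‖ₑ * ENNReal.ofReal (weight a b x)
      + (u1 a x * ∫⁻ y in Ioi x, e1 y * ‖g y‖ₑ)
      + (u2 b x * ∫⁻ y in Ioo 0 x, e2 y * ‖g y‖ₑ)
      + ENNReal.ofReal (2 * (14 + 6 / (a + 1))) *
        (ENNReal.ofReal (weight ((a - 1) / 2) (b - 1) x) * ∫⁻ y in Ioi x, 1 * ‖g y‖ₑ) := by
  have hp : 0 < a + 1 := by linarith [ha.1]
  have hw := weight_pos a b hx
  have h1 : ‖Aop g x‖ₑ ≤ ‖g x‖ₑ + ‖2 * m1 x * Sop g x‖ₑ + ‖2 * m2 x * tail g x‖ₑ := by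
    have : Aop g x = g x + 2 * m1 x * Sop g x - 2 * m2 x * tail g x := rfl
    rw [this]
    exact enorm_sub_le.trans (add_le_add_left (enorm_add_le _ _) _)
  have h2 : ‖2 * m1 x * Sop g x‖ₑ * ENNReal.ofReal (weight a b x) ≤
      (u1 a x * ∫⁻ y in Ioi x, e1 y * ‖g y‖ₑ) + (u2 b x * ∫⁻ y in Ioo 0 x, e2 y * ‖g y‖ₑ) := by
    rw [enorm_mul, mul_right_comm, Real.enorm_eq_ofReal_abs (2 * m1 x),
      ← ENNReal.ofReal_mul (abs_nonneg _), abs_mul, abs_of_pos (two_pos : (0:ℝ) < 2)]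
    rcases le_or_gt x 1 with h | h
    · refine le_add_right ?_
      rw [u1, if_pos h, weight, if_pos h]
      refine mul_le_mul' (ENNReal.ofReal_le_ofReal ?_) (S_enorm_small g hx h)
      have := m1_abs_le_one hx
      have := Real.rpow_pos_of_pos hx a
      nlinarith
    · refine le_add_left ?_
      rw [u2, if_pos h, weight, if_neg (not_le.mpr h)]
      refine mul_le_mul' (ENNReal.ofReal_le_ofReal ?_) (S_enorm_large g h)
      have := m1_abs_large h.le
      gcongr
  have h3 : ‖2 * m2 x * tail g x‖ₑ * ENNReal.ofReal (weight a b x) ≤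
      ENNReal.ofReal (2 * (14 + 6 / (a + 1))) *
        (ENNReal.ofReal (weight ((a - 1) / 2) (b - 1) x) * ∫⁻ y in Ioi x, 1 * ‖g y‖ₑ) := by
    rw [enorm_mul, mul_right_comm, Real.enorm_eq_ofReal_abs (2 * m2 x),
      ← ENNReal.ofReal_mul (abs_nonneg _), abs_mul, abs_of_pos (two_pos : (0:ℝ) < 2),
      ← mul_assoc, ← ENNReal.ofReal_mul (by positivity)]
    refine mul_le_mul' (ENNReal.ofReal_le_ofReal (m2_weight ha hx)) ?_
    simp only [one_mul]
    exact enorm_integral_le_lintegral_enorm _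
  calc ‖Aop g x‖ₑ * ENNReal.ofReal (weight a b x)
      ≤ (‖g x‖ₑ + ‖2 * m1 x * Sop g x‖ₑ + ‖2 * m2 x * tail g x‖ₑ) *
        ENNReal.ofReal (weight a b x) := mul_le_mul_left h1 _
    _ = ‖g x‖ₑ * ENNReal.ofReal (weight a b x) +
        ‖2 * m1 x * Sop g x‖ₑ * ENNReal.ofReal (weight a b x) +
        ‖2 * m2 x * tail g x‖ₑ * ENNReal.ofReal (weight a b x) := by ring
    _ ≤ _ := by
        refine add_le_add ?_ h3
        exact (add_le_add le_rfl h2).trans (le_of_eq (add_assoc _ _ _).symm)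

theorem lintegral_add_le' {μ : Measure ℝ} {f p q : ℝ → ℝ≥0∞} {A B : ℝ≥0∞} (hp : ∫⁻ x, p x ∂μ ≤ A)
    (hq : ∫⁻ x, q x ∂μ ≤ B) (hm : AEMeasurable p μ) (h : ∀ᵐ x ∂μ, f x ≤ p x + q x) :
    ∫⁻ x, f x ∂μ ≤ A + B := by
  refine (lintegral_mono_ae h).trans ?_
  rw [lintegral_add_left' hm]
  exact add_le_add hp hq

theorem meas_Ioi (v : ℝ → ℝ≥0∞) : Measurable (fun x : ℝ => ∫⁻ y in Ioi x, v y) := by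
  have : Antitone (fun x : ℝ => ∫⁻ y in Ioi x, v y) := fun x y hxy =>
    lintegral_mono_set (Ioi_subset_Ioi hxy)
  exact this.measurable

theorem meas_Ioo (v : ℝ → ℝ≥0∞) : Measurable (fun x : ℝ => ∫⁻ y in Ioo 0 x, v y) := by
  have : Monotone (fun x : ℝ => ∫⁻ y in Ioo 0 x, v y) := fun x y hxy =>
    lintegral_mono_set (Ioo_subset_Ioo_right hxy)
  exact this.measurable

theorem A_bound {a b : ℝ} (ha : a ∈ Ioo (-1:ℝ) 1) (hb : 1 < b) : ∃ C : ℝ≥0∞, C ≠ ∞ ∧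
    ∀ g : ℝ → ℝ, MemX a b g → N a b (Aop g) ≤ C * N a b g := by
  obtain ⟨C2, h2⟩ := cond2 hb
  refine ⟨1 + ENNReal.ofReal (6 / (a + 1)) + ENNReal.ofReal C2 +
    ENNReal.ofReal (2 * (14 + 6 / (a + 1))) * ENNReal.ofReal (2 / (a + 1) + 1 / b), by finiteness,
    fun g hg => ?_⟩
  have hm := (memX_iff.mp hg).1
  have s1 := schur_up (b := b) hm (u1_meas a) e1_meas (fun y hy => cond1 (b := b) ha.1 hy)
  have s2 := schur_low (b := b) hm (u2_meas b) e2_meas (fun y hy => h2 a y hy)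
  have s3 := schur_up (a := a) (b := b) hm (weight_meas ((a - 1) / 2) (b - 1)).ennreal_ofReal
    (e := fun _ => 1) measurable_const (fun y hy => by
      rw [one_mul]; exact cond3 ha hb hy)
  have m0 : AEMeasurable (fun y => ‖g y‖ₑ * ENNReal.ofReal (weight a b y))
      (volume.restrict (Ioi 0)) := hm.enorm.mul (weight_meas a b).ennreal_ofReal.aemeasurable
  have m1' : AEMeasurable (fun x => u1 a x * ∫⁻ y in Ioi x, e1 y * ‖g y‖ₑ)
    (volume.restrict (Ioi 0)) := ((u1_meas a).mul (meas_Ioi _)).aemeasurable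
  have m2' : AEMeasurable (fun x => u2 b x * ∫⁻ y in Ioo 0 x, e2 y * ‖g y‖ₑ)
    (volume.restrict (Ioi 0)) := ((u2_meas b).mul (meas_Ioo _)).aemeasurable
  have s3' : ∫⁻ x in Ioi (0:ℝ), ENNReal.ofReal (2 * (14 + 6 / (a + 1))) *
        (ENNReal.ofReal (weight ((a - 1) / 2) (b - 1) x) * ∫⁻ y in Ioi x, 1 * ‖g y‖ₑ) ≤
      ENNReal.ofReal (2 * (14 + 6 / (a + 1))) *
        (ENNReal.ofReal (2 / (a + 1) + 1 / b) * N a b g) := by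
    rw [lintegral_const_mul' _ _ ENNReal.ofReal_ne_top]
    exact mul_le_mul_right s3 _
  have t1 := lintegral_add_le' (le_refl (N a b g)) s1 m0 (ae_of_all _ fun x => le_rfl)
  have t2 := lintegral_add_le' t1 s2 (m0.add m1') (ae_of_all _ fun x => le_rfl)
  have t3 : N a b (Aop g) ≤ _ := lintegral_add_le' t2 s3' ((m0.add m1').add m2') (by
    filter_upwards [ae_restrict_mem measurableSet_Ioi] with x hx
    exact A_pointwise ha g hx)
  refine t3.trans (le_of_eq ?_)
  ring

theorem part1 {a b : ℝ} (ha : a ∈ Ioo (-1:ℝ) 1) (hb : 1 < b) : ∃ C > (0:ℝ),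
    ∀ g : ℝ → ℝ, MemX a b g →
      MemX a b (A0op g) ∧ (∫ x in Ioi (0:ℝ), x * A0op g x) = 0 ∧
      Xnorm a b (A0op g) ≤ C * Xnorm a b g := by
  obtain ⟨C, hC, hA⟩ := A_bound ha hb
  have hm1 := m1_memX ha.1 hb
  have hN1 := (memX_iff.mp hm1).2
  set D : ℝ≥0∞ := (1 + N a b m1) * C with hD
  have hDf : D ≠ ∞ := ENNReal.mul_ne_top (ENNReal.add_ne_top.mpr ⟨ENNReal.one_ne_top, hN1.ne⟩) hC
  refine ⟨D.toReal + 1, by positivity, fun g hg => ?_⟩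
  have hI := hg.mom ha.2.le hb.le
  have hNg := (memX_iff.mp hg).2
  have hAm : MemX a b (Aop g) :=
    memX_iff.mpr ⟨Aop_aesm hI, (hA g hg).trans_lt (ENNReal.mul_lt_top hC.lt_top hNg)⟩
  have hIA := hAm.mom ha.2.le hb.le
  set k := ∫ y in Ioi (0:ℝ), y * Aop g y with hk
  have hkN : ‖k‖ₑ ≤ N a b (Aop g) :=
    (enorm_integral_le_lintegral_enorm _).trans (mom_le_N ha.2.le hb.le _)
  have hA0 : MemX a b (A0op g) := by
    have : IntegrableOn (fun x => Aop g x * weight a b x + k * (m1 x * weight a b x)) (Ioi 0) :=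
      Integrable.add hAm (Integrable.const_mul hm1 k)
    refine this.congr_fun (fun x _ => ?_) measurableSet_Ioi
    simp only [A0op, ← hk]
    ring
  refine ⟨hA0, ?_, ?_⟩
  · have : ∫ x in Ioi (0:ℝ), x * A0op g x = ∫ x in Ioi (0:ℝ), (x * Aop g x + k * (x * m1 x)) := by
      refine setIntegral_congr_fun measurableSet_Ioi (fun x _ => ?_)
      simp only [A0op, ← hk]
      ring
    rw [this, integral_add hIA (mom_m1_int.const_mul k), integral_const_mul, mom_m1, ← hk]
    ring
  · have hb1 : N a b (A0op g) ≤ D * N a b g := by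
      have t := lintegral_add_le' (μ := volume.restrict (Ioi (0:ℝ)))
        (f := fun x => ‖A0op g x‖ₑ * ENNReal.ofReal (weight a b x))
        (p := fun x => ‖Aop g x‖ₑ * ENNReal.ofReal (weight a b x))
        (q := fun x => ‖k‖ₑ * (‖m1 x‖ₑ * ENNReal.ofReal (weight a b x)))
        (A := N a b (Aop g)) (B := ‖k‖ₑ * N a b m1) le_rfl
        (by rw [lintegral_const_mul' _ _ enorm_ne_top]; rfl)
        ((Aop_aesm hI).enorm.mul (weight_meas a b).ennreal_ofReal.aemeasurable)
        (ae_of_all _ fun x => by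
          have : ‖A0op g x‖ₑ ≤ ‖Aop g x‖ₑ + ‖k‖ₑ * ‖m1 x‖ₑ := by
            rw [← enorm_mul]; exact enorm_add_le _ _
          refine (mul_le_mul_left this _).trans (le_of_eq ?_)
          ring)
      calc N a b (A0op g) ≤ N a b (Aop g) + ‖k‖ₑ * N a b m1 := t
        _ ≤ N a b (Aop g) + N a b (Aop g) * N a b m1 := by gcongr
        _ = (1 + N a b m1) * N a b (Aop g) := by ring
        _ ≤ (1 + N a b m1) * (C * N a b g) := mul_le_mul_right (hA g hg) _
        _ = D * N a b g := by rw [hD]; ring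
    rw [Xnorm_eq hA0, Xnorm_eq hg]
    have h1 := ENNReal.toReal_mono (ENNReal.mul_ne_top hDf hNg.ne) hb1
    rw [ENNReal.toReal_mul] at h1
    have : 0 ≤ (N a b g).toReal := ENNReal.toReal_nonneg
    linarith

theorem stmt11 (a b : ℝ) (ha : a ∈ Ioo (-1:ℝ) 1) (hb : 1 < b) :
    (∃ C > (0:ℝ), ∀ g : ℝ → ℝ, MemX a b g →
      MemX a b (A0op g) ∧ (∫ x in Ioi (0:ℝ), x * A0op g x) = 0 ∧
      Xnorm a b (A0op g) ≤ C * Xnorm a b g) ∧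
    (∀ g : ℝ → ℝ, MemX a b g →
      ∀ᵐ x ∂(volume.restrict (Ioi (0:ℝ))), Lop (A0op g) x = g x) ∧
    (∀ g : ℝ → ℝ, MemX a b g → (∫ x in Ioi (0:ℝ), x * g x) = 0 →
      (∀ᵐ x ∂(volume.restrict (Ioi (0:ℝ))), Lop g x = 0) →
      ∀ᵐ x ∂(volume.restrict (Ioi (0:ℝ))), g x = 0) := by
  have p1 := part1 ha hb
  refine ⟨p1, fun g hg => ?_, fun g hg h0 hL => part3 (hg.mom ha.2.le hb.le) h0 hL⟩
  obtain ⟨C, -, hC⟩ := p1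
  filter_upwards [ae_restrict_mem measurableSet_Ioi] with x hx
  exact part2 (hg.mom ha.2.le hb.le) ((hC g hg).1.mom ha.2.le hb.le) x hx
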